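/- arXiv:2512.23174 — 9 statements merged into one kernel-verified Lean document; each statement's English description precedes it below -/
import Mathlib

section
/- Let q ∈ ℂ be nonzero, let ξ₁, ξ₂, Q₊, Q₋, Λ : ℂ \ {0} → ℂ be functions, and let z ∈ ℂ \ {0} satisfy Q₊(z) ≠ 0 and Q₊(qz) ≠ 0. Define the 2×2 complex matrices v(w) = [[Q₊(w), Q₋(w)], [0, Q₊(w)⁻¹]] (for w with Q₊(w) ≠ 0) and Z(z) = diag(ξ₁(z), ξ₂(z)). Then v(qz)·Z(z)·v(z)⁻¹ = [[ξ₁(z)Q₊(qz)/Q₊(z), ξ₂(z)Q₊(z)Q₋(qz) − ξ₁(z)Q₋(z)Q₊(qz)], [0, ξ₂(z)Q₊(z)/Q₊(qz)]]. Consequently, the Miura q-oper connection A(z) = [[ξ₁(z)Q₊(qz)/Q₊(z), Λ(z)], [0, ξ₂(z)Q₊(z)/Q₊(qz)]] satisfies the generalized Z-twisted condition A(z) = v(qz)Z(z)v(z)⁻¹ at z if and only if the GL(2) QQ-relation ξ₂(z)Q₊(z)Q₋(qz) − ξ₁(z)Q₋(z)Q₊(qz) = Λ(z) holds at z. -/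
open Matrix

/-- The upper-triangular gauge transformation `v(w) = [[Q₊(w), Q₋(w)], [0, Q₊(w)⁻¹]]`. -/
noncomputable def vGauge (Qp Qm : ℂ → ℂ) (w : ℂ) : Matrix (Fin 2) (Fin 2) ℂ :=
  !![Qp w, Qm w; 0, (Qp w)⁻¹]

/-- The diagonal twist `Z(z) = diag(ξ₁(z), ξ₂(z))`. -/
noncomputable def Ztwist (ξ₁ ξ₂ : ℂ → ℂ) (z : ℂ) : Matrix (Fin 2) (Fin 2) ℂ :=
  !![ξ₁ z, 0; 0, ξ₂ z]

section UpperTriangular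

variable {R : Type*} [CommRing R]

theorem inv_upperTriangular_fin_two (a d : Rˣ) (b : R) :
    (!![(a : R), b; 0, (d : R)])⁻¹ = !![(↑a⁻¹ : R), -(↑a⁻¹ * b * ↑d⁻¹); 0, ↑d⁻¹] := by
  apply Matrix.inv_eq_right_inv
  simp [Matrix.one_fin_two, mul_assoc]

theorem upperTriangular_mul_diagonal_mul_inv_fin_two (a d : Rˣ) (b a' b' d' x y : R) :
    !![a', b'; 0, d'] * !![x, 0; 0, y] * (!![(a : R), b; 0, (d : R)])⁻¹ =
      !![x * a' * ↑a⁻¹, y * b' * ↑d⁻¹ - x * a' * ↑a⁻¹ * b * ↑d⁻¹; 0, y * d' * ↑d⁻¹] := by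
  rw [inv_upperTriangular_fin_two]
  ext i j
  fin_cases i <;> fin_cases j <;> simp <;> ring

theorem unimodularGauge_mul_diagonal_mul_inv (p p' : Rˣ) (m m' x y : R) :
    !![(p' : R), m'; 0, ↑p'⁻¹] * !![x, 0; 0, y] * (!![(p : R), m; 0, ↑p⁻¹])⁻¹ =
      !![x * p' * ↑p⁻¹, y * p * m' - x * m * p'; 0, y * p * ↑p'⁻¹] := by
  have upper_right : y * m' * p - x * p' * ↑p⁻¹ * m * p = y * p * m' - x * m * p' := by
    linear_combination -(x * p' * m) * p.inv_mul
  rw [upperTriangular_mul_diagonal_mul_inv_fin_two, inv_inv, upper_right,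
    mul_right_comm y (↑p'⁻¹ : R)]

/-- The values `Q₊(z), Q₊(qz)` become units `p, p'` of a commutative ring, and
`Q₋(z), Q₋(qz), ξ₁(z), ξ₂(z), Λ(z)` become arbitrary elements `m, m', x, y, l`. -/
theorem stmt_1_general (p p' : Rˣ) (m m' x y l : R) :
    (!![(p' : R), m'; 0, ↑p'⁻¹] * !![x, 0; 0, y] * (!![(p : R), m; 0, ↑p⁻¹])⁻¹ =
      !![x * p' * ↑p⁻¹, y * p * m' - x * m * p'; 0, y * p * ↑p'⁻¹]) ∧
    (!![x * p' * ↑p⁻¹, l; 0, y * p * ↑p'⁻¹] =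
        !![(p' : R), m'; 0, ↑p'⁻¹] * !![x, 0; 0, y] * (!![(p : R), m; 0, ↑p⁻¹])⁻¹ ↔
      y * p * m' - x * m * p' = l) := by
  have explicit_form := unimodularGauge_mul_diagonal_mul_inv p p' m m' x y
  refine ⟨explicit_form, ?_⟩
  rw [explicit_form, eq_comm]
  simp

end UpperTriangular

/-- explicit form of `v(qz)·Z(z)·v(z)⁻¹`, and the Miura q-oper connection
satisfies the generalized Z-twisted condition at `z` iff the GL(2) QQ-relation holds at `z`. -/
theorem stmt_1 (q : ℂ) (hq : q ≠ 0) (ξ₁ ξ₂ Qp Qm Lam : ℂ → ℂ)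
    (z : ℂ) (hz : z ≠ 0) (h1 : Qp z ≠ 0) (h2 : Qp (q * z) ≠ 0) :
    (vGauge Qp Qm (q * z) * Ztwist ξ₁ ξ₂ z * (vGauge Qp Qm z)⁻¹ =
      !![ξ₁ z * Qp (q * z) / Qp z,
         ξ₂ z * Qp z * Qm (q * z) - ξ₁ z * Qm z * Qp (q * z);
         0, ξ₂ z * Qp z / Qp (q * z)]) ∧
    ((!![ξ₁ z * Qp (q * z) / Qp z, Lam z; 0, ξ₂ z * Qp z / Qp (q * z)] =
        vGauge Qp Qm (q * z) * Ztwist ξ₁ ξ₂ z * (vGauge Qp Qm z)⁻¹) ↔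
      ξ₂ z * Qp z * Qm (q * z) - ξ₁ z * Qm z * Qp (q * z) = Lam z) := by
  simp only [div_eq_mul_inv]
  exact stmt_1_general (Units.mk0 _ h1) (Units.mk0 _ h2) (Qm z) (Qm (q * z)) (ξ₁ z) (ξ₂ z) (Lam z)
end

section
/- Let q ∈ ℂ be nonzero and let ξ₁, ξ₂, Q₊, Q₋, Λ : ℂ \ {0} → ℂ be functions satisfying the GL(2) QQ-relation ξ₂(z)Q₊(z)Q₋(qz) − ξ₁(z)Q₋(z)Q₊(qz) = Λ(z) at z = s and at z = q⁻¹s, where s ∈ ℂ \ {0}. If Q₊(s) = 0 and Λ(s) ≠ 0, then the XXZ Bethe Ansatz relation −ξ₁(s)·Q₊(qs)·Λ(q⁻¹s) = ξ₂(q⁻¹s)·Q₊(q⁻¹s)·Λ(s) holds; in particular, if moreover ξ₂(q⁻¹s), Q₊(q⁻¹s), and Λ(s) are all nonzero, then −(ξ₁(s)/ξ₂(q⁻¹s))·(Q₊(qs)/Q₊(q⁻¹s))·(Λ(q⁻¹s)/Λ(s)) = 1. -/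
section QQRelation

variable {X R K : Type*} [CommRing R] [Field K]

/-- The GL(2) QQ-relation at the point `z`. The multiplicative shift `z ↦ q * z` is replaced by an
arbitrary self-map `σ` of the set of spectral parameters, which need not be invertible; the
functions `Q₊`, `Q₋`, `Λ` are written `Qp`, `Qm`, `Lam`. -/
def QQRelationAt (σ : X → X) (ξ₁ ξ₂ Qp Qm Lam : X → R) (z : X) : Prop :=
  ξ₂ z * Qp z * Qm (σ z) - ξ₁ z * Qm z * Qp (σ z) = Lam z

namespace QQRelationAt

variable {σ : X → X} {ξ₁ ξ₂ Qp Qm Lam : X → R} {z : X}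

theorem eq_neg_mul_of_root (h : QQRelationAt σ ξ₁ ξ₂ Qp Qm Lam z) (hroot : Qp z = 0) :
    Lam z = -(ξ₁ z * Qm z * Qp (σ z)) := by
  rw [← h, hroot, mul_zero, zero_mul, zero_sub]

theorem eq_mul_of_root_shift (h : QQRelationAt σ ξ₁ ξ₂ Qp Qm Lam z) (hroot : Qp (σ z) = 0) :
    Lam z = ξ₂ z * Qp z * Qm (σ z) := by
  rw [← h, hroot, mul_zero, sub_zero]

/-- At a root `σ z` of `Qp` both QQ-relations are proportional to the same value `Qm (σ z)`, so
cross-multiplying eliminates `Qm` without dividing by it. -/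
theorem bethe_of_root_shift (h : QQRelationAt σ ξ₁ ξ₂ Qp Qm Lam z)
    (h_shift : QQRelationAt σ ξ₁ ξ₂ Qp Qm Lam (σ z)) (hroot : Qp (σ z) = 0) :
    -(ξ₁ (σ z) * Qp (σ (σ z)) * Lam z) = ξ₂ z * Qp z * Lam (σ z) :=
  calc -(ξ₁ (σ z) * Qp (σ (σ z)) * Lam z)
      = -(ξ₁ (σ z) * Qp (σ (σ z)) * (ξ₂ z * Qp z * Qm (σ z))) := by
        rw [h.eq_mul_of_root_shift hroot]
    _ = ξ₂ z * Qp z * -(ξ₁ (σ z) * Qm (σ z) * Qp (σ (σ z))) := by ring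
    _ = ξ₂ z * Qp z * Lam (σ z) := by rw [h_shift.eq_neg_mul_of_root hroot]

end QQRelationAt

theorem neg_div_mul_div_mul_div_eq_one_iff {a b c a' b' c' : K}
    (ha' : a' ≠ 0) (hb' : b' ≠ 0) (hc' : c' ≠ 0) :
    -(a / a' * (b / b') * (c / c')) = 1 ↔ -(a * b * c) = a' * b' * c' := by
  rw [div_mul_div_comm, div_mul_div_comm, ← neg_div,
    div_eq_one_iff_eq (mul_ne_zero (mul_ne_zero ha' hb') hc')]

theorem stmt_3_general (σ : X → X) (ξ₁ ξ₂ Qp Qm Lam : X → K) (z : X)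
    (h : QQRelationAt σ ξ₁ ξ₂ Qp Qm Lam z)
    (h_shift : QQRelationAt σ ξ₁ ξ₂ Qp Qm Lam (σ z)) (hroot : Qp (σ z) = 0) :
    -(ξ₁ (σ z) * Qp (σ (σ z)) * Lam z) = ξ₂ z * Qp z * Lam (σ z) ∧
    (ξ₂ z ≠ 0 → Qp z ≠ 0 → Lam (σ z) ≠ 0 →
      -(ξ₁ (σ z) / ξ₂ z * (Qp (σ (σ z)) / Qp z) * (Lam z / Lam (σ z))) = 1) := by
  have bethe := h.bethe_of_root_shift h_shift hroot
  exact ⟨bethe, fun hξ₂ hQp hLam =>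
    (neg_div_mul_div_mul_div_eq_one_iff hξ₂ hQp hLam).mpr bethe⟩

end QQRelation

/-- evaluating the GL(2) QQ-relation at a root `s` of `Q₊` and at `q⁻¹s`
yields the generalized gl₂ XXZ Bethe Ansatz relation. -/
theorem stmt_3 (q : ℂ) (hq : q ≠ 0) (ξ₁ ξ₂ Qp Qm Lam : ℂ → ℂ) (s : ℂ) (hs : s ≠ 0)
    (h1 : ξ₂ s * Qp s * Qm (q * s) - ξ₁ s * Qm s * Qp (q * s) = Lam s)
    (h2 : ξ₂ (q⁻¹ * s) * Qp (q⁻¹ * s) * Qm s - ξ₁ (q⁻¹ * s) * Qm (q⁻¹ * s) * Qp s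
      = Lam (q⁻¹ * s))
    (h0 : Qp s = 0) (hΛ : Lam s ≠ 0) :
    -(ξ₁ s * Qp (q * s) * Lam (q⁻¹ * s)) = ξ₂ (q⁻¹ * s) * Qp (q⁻¹ * s) * Lam s ∧
    (ξ₂ (q⁻¹ * s) ≠ 0 → Qp (q⁻¹ * s) ≠ 0 →
      -(ξ₁ s / ξ₂ (q⁻¹ * s) * (Qp (q * s) / Qp (q⁻¹ * s)) * (Lam (q⁻¹ * s) / Lam s)) = 1) := by
  have bethe := stmt_3_general (q * ·) ξ₁ ξ₂ Qp Qm Lam (q⁻¹ * s)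
  simp only [QQRelationAt, mul_inv_cancel_left₀ hq] at bethe
  exact (bethe h2 h1 h0).imp_right fun ratio hξ₂ hQp => ratio hξ₂ hQp hΛ
end

section
/- Let q, μ, μ̃, γ ∈ ℂ be nonzero, let a₁, …, aₙ ∈ ℂ \ {0}, s₁, …, s_k ∈ ℂ \ {0}, and fix 1 ≤ i ≤ k. Define ξ₁(z) = q(z−μ)(z−μ̃)/(qz²−1), ξ₂(z) = (qμz−1)(qμ̃z−1)/(qz²−1), Q₊(z) = ∏_{j=1}^{k}(z−s_j)(1/z−s_j), and Λ(z) = γ∏_{l=1}^{n}(z−a_l)(1/(qz)−a_l). Assume that every factor occurring in a denominator below is nonzero (in particular q s_i² ≠ 1, s_i² ≠ q, (μs_i−1)(μ̃s_i−1) ≠ 0, s_i ≠ q s_j, s_i s_j ≠ q, a_l ≠ s_i, a_l q s_i ≠ 1 for all j, l). Then the Bethe relation −ξ₁(s_i)·Q₊(q s_i)·Λ(q⁻¹ s_i) = ξ₂(q⁻¹ s_i)·Q₊(q⁻¹ s_i)·Λ(s_i) holds if and only if ((s_i²−q)/(q s_i²−1)) · ((s_i−μ)(s_i−μ̃)/((μ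 s_i−1)(μ̃ s_i−1))) · ∏_{j=1}^{k} ((q s_i−s_j)(q s_i s_j−1)/((s_i−q s_j)(s_i s_j−q))) · ∏_{l=1}^{n} ((a_l s_i−1)(a_l q−s_i)/((a_l−s_i)(a_l q s_i−1))) = −1. -/
/-!
Clearing denominators turns both equations into the same polynomial equation in `x = sᵢ`. Every
factor of `Q₊(q x)` and of `Q₊(q⁻¹ x)` is a polynomial divided by `-q x`, every factor of `Λ(q⁻¹ x)`
and of `Λ(x)` is a polynomial divided by `q x`, and `ξ₁(x)`, `ξ₂(q⁻¹ x)` have the common denominator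
`(q x² - 1) (x² - q)`. The two sides of the Bethe relation therefore share a nonzero factor, and the
remaining polynomials are the numerator and the denominator of Sklyanin's product.
-/

namespace OpenXXZ

variable {K ι κ : Type*} [Field K] [Fintype ι] [Fintype κ]

/-- The coefficient `ξ₁` of the Bethe relation, with boundary parameters `μ` and `ν` (the paper's
`μ̃`). It takes the junk value `0` at `q z² = 1`. -/
def xi₁ (q μ ν z : K) : K :=
  q * (z - μ) * (z - ν) / (q * z ^ 2 - 1)

/-- The coefficient `ξ₂` of the Bethe relation, with the same conventions as `xi₁`. -/
def xi₂ (q μ ν z : K) : K :=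
  (q * μ * z - 1) * (q * ν * z - 1) / (q * z ^ 2 - 1)

/-- The Laurent polynomial `Q₊`, symmetric under `z ↦ z⁻¹`, encoding the Bethe roots `s`. -/
def qPlus (s : ι → K) (z : K) : K :=
  ∏ j, (z - s j) * (z⁻¹ - s j)

/-- The Laurent polynomial `Λ`, symmetric under `z ↦ (q z)⁻¹`, encoding the regular singularities
`a` of the `q`-oper. -/
def singularityPoly (q γ : K) (a : κ → K) (z : K) : K :=
  γ * ∏ l, (z - a l) * ((q * z)⁻¹ - a l)

/-- The numerator of the product in Sklyanin's Bethe equation, as a polynomial in `x`. -/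
def sklyaninNum (q μ ν : K) (a : κ → K) (s : ι → K) (x : K) : K :=
  (x ^ 2 - q) * ((x - μ) * (x - ν)) *
    (∏ j, (q * x - s j) * (q * x * s j - 1)) * ∏ l, (a l * x - 1) * (a l * q - x)

/-- The denominator of the product in Sklyanin's Bethe equation, as a polynomial in `x`. -/
def sklyaninDenom (q μ ν : K) (a : κ → K) (s : ι → K) (x : K) : K :=
  (q * x ^ 2 - 1) * ((μ * x - 1) * (ν * x - 1)) *
    (∏ j, (x - q * s j) * (x * s j - q)) * ∏ l, (a l - x) * (a l * q * x - 1)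

variable {q μ ν γ x : K} {a : κ → K} {s : ι → K}

theorem xi₁_eq_mul_common_factor (h : x ^ 2 - q ≠ 0) :
    xi₁ q μ ν x =
      (x ^ 2 - q) * ((x - μ) * (x - ν)) * (q / ((q * x ^ 2 - 1) * (x ^ 2 - q))) := by
  unfold xi₁
  field_simp

theorem xi₂_inv_mul_eq_mul_common_factor (hq : q ≠ 0) (h : q * x ^ 2 - 1 ≠ 0) :
    xi₂ q μ ν (q⁻¹ * x) =
      (q * x ^ 2 - 1) * ((μ * x - 1) * (ν * x - 1)) *
        (q / ((q * x ^ 2 - 1) * (x ^ 2 - q))) := by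
  have cancel_q (m : K) : q * m * (q⁻¹ * x) = m * x := by field_simp
  have denom_eq : q * (q⁻¹ * x) ^ 2 - 1 = (x ^ 2 - q) / q := by field_simp
  rw [xi₂, cancel_q, cancel_q, denom_eq, div_div_eq_mul_div, mul_div_assoc',
    mul_assoc (q * x ^ 2 - 1), mul_div_mul_left _ _ h]

theorem qPlus_mul (hq : q ≠ 0) (hx : x ≠ 0) :
    qPlus s (q * x) =
      (∏ j, (q * x - s j) * (q * x * s j - 1)) * (-(q * x)⁻¹) ^ Fintype.card ι := by
  rw [qPlus, ← Finset.card_univ, Finset.prod_mul_pow_card]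
  refine Finset.prod_congr rfl fun j _ ↦ ?_
  field_simp
  ring

theorem qPlus_inv_mul (hq : q ≠ 0) (hx : x ≠ 0) :
    qPlus s (q⁻¹ * x) =
      (∏ j, (x - q * s j) * (x * s j - q)) * (-(q * x)⁻¹) ^ Fintype.card ι := by
  rw [qPlus, ← Finset.card_univ, Finset.prod_mul_pow_card]
  refine Finset.prod_congr rfl fun j _ ↦ ?_
  field_simp
  ring

theorem singularityPoly_inv_mul (hq : q ≠ 0) (hx : x ≠ 0) :
    singularityPoly q γ a (q⁻¹ * x) =
      γ * ((∏ l, (a l * x - 1) * (a l * q - x)) * (q * x)⁻¹ ^ Fintype.card κ) := by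
  rw [singularityPoly, ← Finset.card_univ, Finset.prod_mul_pow_card]
  congr 1
  refine Finset.prod_congr rfl fun l _ ↦ ?_
  field_simp
  ring

theorem singularityPoly_eq_mul_prod (hq : q ≠ 0) (hx : x ≠ 0) :
    singularityPoly q γ a x =
      γ * ((∏ l, (a l - x) * (a l * q * x - 1)) * (q * x)⁻¹ ^ Fintype.card κ) := by
  rw [singularityPoly, ← Finset.card_univ, Finset.prod_mul_pow_card]
  congr 1
  refine Finset.prod_congr rfl fun l _ ↦ ?_
  field_simp
  ring

theorem bethe_relation_iff_sklyaninNum_eq_neg (hq : q ≠ 0) (hγ : γ ≠ 0) (hx : x ≠ 0)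
    (h1 : q * x ^ 2 - 1 ≠ 0) (h2 : x ^ 2 - q ≠ 0) :
    -(xi₁ q μ ν x * qPlus s (q * x) * singularityPoly q γ a (q⁻¹ * x)) =
        xi₂ q μ ν (q⁻¹ * x) * qPlus s (q⁻¹ * x) * singularityPoly q γ a x ↔
      sklyaninNum q μ ν a s x = -sklyaninDenom q μ ν a s x := by
  set c := q / ((q * x ^ 2 - 1) * (x ^ 2 - q)) * (-(q * x)⁻¹) ^ Fintype.card ι *
    (γ * (q * x)⁻¹ ^ Fintype.card κ) with hc
  have c_ne_zero : c ≠ 0 := by simp [hc, hq, hγ, hx, h1, h2]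
  have lhs_eq : xi₁ q μ ν x * qPlus s (q * x) * singularityPoly q γ a (q⁻¹ * x) =
      sklyaninNum q μ ν a s x * c := by
    rw [xi₁_eq_mul_common_factor h2, qPlus_mul hq hx, singularityPoly_inv_mul hq hx, sklyaninNum]
    ring
  have rhs_eq : xi₂ q μ ν (q⁻¹ * x) * qPlus s (q⁻¹ * x) * singularityPoly q γ a x =
      sklyaninDenom q μ ν a s x * c := by
    rw [xi₂_inv_mul_eq_mul_common_factor hq h1, qPlus_inv_mul hq hx,
      singularityPoly_eq_mul_prod hq hx, sklyaninDenom]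
    ring
  rw [lhs_eq, rhs_eq, ← neg_mul, mul_left_inj' c_ne_zero, neg_eq_iff_eq_neg]

theorem sklyaninNum_div_sklyaninDenom :
    sklyaninNum q μ ν a s x / sklyaninDenom q μ ν a s x =
      (x ^ 2 - q) / (q * x ^ 2 - 1) * ((x - μ) * (x - ν) / ((μ * x - 1) * (ν * x - 1))) *
        (∏ j, (q * x - s j) * (q * x * s j - 1) / ((x - q * s j) * (x * s j - q))) *
        (∏ l, (a l * x - 1) * (a l * q - x) / ((a l - x) * (a l * q * x - 1))) := by
  simp only [sklyaninNum, sklyaninDenom, Finset.prod_div_distrib, div_mul_div_comm]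

theorem sklyaninDenom_ne_zero (h1 : q * x ^ 2 - 1 ≠ 0) (h3 : μ * x - 1 ≠ 0) (h4 : ν * x - 1 ≠ 0)
    (h5 : ∀ j, x - q * s j ≠ 0) (h6 : ∀ j, x * s j - q ≠ 0)
    (h7 : ∀ l, a l - x ≠ 0) (h8 : ∀ l, a l * q * x - 1 ≠ 0) :
    sklyaninDenom q μ ν a s x ≠ 0 := by
  simp [sklyaninDenom, Finset.prod_ne_zero_iff, h1, h3, h4, h5, h6, h7, h8]

end OpenXXZ

open OpenXXZ in
theorem stmt_5_general {K ι κ : Type*} [Field K] [Fintype ι] [Fintype κ]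
    {q μ ν γ x : K} {a : κ → K} {s : ι → K} (hq : q ≠ 0) (hγ : γ ≠ 0) (hx : x ≠ 0)
    (h1 : q * x ^ 2 - 1 ≠ 0) (h2 : x ^ 2 - q ≠ 0) (h3 : μ * x - 1 ≠ 0) (h4 : ν * x - 1 ≠ 0)
    (h5 : ∀ j, x - q * s j ≠ 0) (h6 : ∀ j, x * s j - q ≠ 0)
    (h7 : ∀ l, a l - x ≠ 0) (h8 : ∀ l, a l * q * x - 1 ≠ 0) :
    -(xi₁ q μ ν x * qPlus s (q * x) * singularityPoly q γ a (q⁻¹ * x)) =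
        xi₂ q μ ν (q⁻¹ * x) * qPlus s (q⁻¹ * x) * singularityPoly q γ a x ↔
      (x ^ 2 - q) / (q * x ^ 2 - 1) * ((x - μ) * (x - ν) / ((μ * x - 1) * (ν * x - 1))) *
        (∏ j, (q * x - s j) * (q * x * s j - 1) / ((x - q * s j) * (x * s j - q))) *
        (∏ l, (a l * x - 1) * (a l * q - x) / ((a l - x) * (a l * q * x - 1))) = -1 := by
  rw [bethe_relation_iff_sklyaninNum_eq_neg hq hγ hx h1 h2, ← sklyaninNum_div_sklyaninDenom,
    div_eq_iff (sklyaninDenom_ne_zero h1 h3 h4 h5 h6 h7 h8), neg_one_mul]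

/-- the Bethe relation for reflection-invariant generalized Z-twisted
(GL(2),q)-opers with constant asymptotics is equivalent to Sklyanin's open gl₂ XXZ
Bethe equations with diagonal boundary conditions. -/
theorem stmt_5 (q μ μt γ : ℂ) (hq : q ≠ 0) (hμ : μ ≠ 0) (hμt : μt ≠ 0) (hγ : γ ≠ 0)
    (n k : ℕ) (a : Fin n → ℂ) (s : Fin k → ℂ)
    (ha : ∀ l, a l ≠ 0) (hs : ∀ j, s j ≠ 0) (i : Fin k)
    (h1 : q * s i ^ 2 - 1 ≠ 0) (h2 : s i ^ 2 - q ≠ 0)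
    (h3 : μ * s i - 1 ≠ 0) (h4 : μt * s i - 1 ≠ 0)
    (h5 : ∀ j, s i - q * s j ≠ 0) (h6 : ∀ j, s i * s j - q ≠ 0)
    (h7 : ∀ l, a l - s i ≠ 0) (h8 : ∀ l, a l * q * s i - 1 ≠ 0) :
    (let ξ₁ : ℂ → ℂ := fun w => q * (w - μ) * (w - μt) / (q * w ^ 2 - 1);
     let ξ₂ : ℂ → ℂ := fun w => (q * μ * w - 1) * (q * μt * w - 1) / (q * w ^ 2 - 1);
     let Qp : ℂ → ℂ := fun w => ∏ j, (w - s j) * (w⁻¹ - s j);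
     let Lam : ℂ → ℂ := fun w => γ * ∏ l, (w - a l) * ((q * w)⁻¹ - a l);
     -(ξ₁ (s i) * Qp (q * s i) * Lam (q⁻¹ * s i)) =
       ξ₂ (q⁻¹ * s i) * Qp (q⁻¹ * s i) * Lam (s i)) ↔
    (s i ^ 2 - q) / (q * s i ^ 2 - 1) *
        ((s i - μ) * (s i - μt) / ((μ * s i - 1) * (μt * s i - 1))) *
        (∏ j, (q * s i - s j) * (q * s i * s j - 1) /
          ((s i - q * s j) * (s i * s j - q))) *
        (∏ l, (a l * s i - 1) * (a l * q - s i) /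
          ((a l - s i) * (a l * q * s i - 1))) = -1 :=
  stmt_5_general hq hγ (hs i) h1 h2 h3 h4 h5 h6 h7 h8
end

section
/- Let q, μ, μ̃, b, b̃, γ ∈ ℂ be nonzero, let a₁, …, aₙ ∈ ℂ \ {0}, s₁, …, s_k ∈ ℂ \ {0}, and fix 1 ≤ i ≤ k. Define ξ₁(z) = q²(z−μ)(z−μ̃)(z+b)(z+b̃)/((qz²−1)z), ξ₂(z) = (qμz−1)(qμ̃z−1)(qbz+1)(qb̃z+1)/((qz²−1)z), Q₊(z) = ∏_{j=1}^{k}(z−s_j)(1/z−s_j), and Λ(z) = γ∏_{l=1}^{n}(z−a_l)(1/(qz)−a_l). Assume every factor occurring in a denominator below is nonzero. Then the Bethe relation −ξ₁(s_i)·Q₊(q s_i)·Λ(q⁻¹ s_i) = ξ₂(q⁻¹ s_i)·Q₊(q⁻¹ s_i)·Λ(s_i) holds if and only if ((s_i²−q)/(q s_i²−1)) · ((s_i−μ)(s_i−μ̃)/((μ s_i−1)(μ̃ s_i−1))) · ((s_i+b)(s_i+b̃)/((b s_i+1)(b̃ s_i+1))) · ∏_{j=1}^{k} ((q s_i−s_j)(q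 s_i s_j−1)/((s_i−q s_j)(s_i s_j−q))) · ∏_{l=1}^{n} ((a_l s_i−1)(a_l q−s_i)/((a_l−s_i)(a_l q s_i−1))) = −1. -/
/-!
At `x = s i`, dividing the Bethe relation by its right-hand side turns it into `ratio = -1`, where
`ratio` is the product of `ξ₁(x) / ξ₂(q⁻¹x)`, `Q₊(qx) / Q₊(q⁻¹x)` and `Λ(q⁻¹x) / Λ(x)`. At these
points each factor of `Q₊` and of `Λ` is a polynomial divided by `qx`, so the quotients of the
products simplify factor by factor.
-/

section BetheRelation

variable {K ι : Type*} [Field K] [Fintype ι]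

/-- The coefficient `ξ₁` on the left of the Bethe relation; `μt`, `bt` stand for `μ̃`, `b̃`. -/
def xiOne (q μ μt b bt w : K) : K :=
  q ^ 2 * (w - μ) * (w - μt) * (w + b) * (w + bt) / ((q * w ^ 2 - 1) * w)

/-- The coefficient `ξ₂` on the right of the Bethe relation; `μt`, `bt` stand for `μ̃`, `b̃`. -/
def xiTwo (q μ μt b bt w : K) : K :=
  (q * μ * w - 1) * (q * μt * w - 1) * (q * b * w + 1) * (q * bt * w + 1) /
    ((q * w ^ 2 - 1) * w)

/-- The function `Q₊` with Bethe roots `s`, invariant under the reflection `w ↦ w⁻¹`. -/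
def qPlus (s : ι → K) (w : K) : K :=
  ∏ j, (w - s j) * (w⁻¹ - s j)

/-- The function `Λ` with inhomogeneities `a` and scale `γ`, which records the singularities of the
oper and is invariant under the reflection `w ↦ (q * w)⁻¹`. -/
def lam (q γ : K) (a : ι → K) (w : K) : K :=
  γ * ∏ l, (w - a l) * ((q * w)⁻¹ - a l)

variable {q x : K}

lemma xiTwo_inv_mul (hq : q ≠ 0) (μ μt b bt x : K) :
    xiTwo q μ μt b bt (q⁻¹ * x) =
      q ^ 2 * ((μ * x - 1) * (μt * x - 1) * (b * x + 1) * (bt * x + 1)) /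
        ((x ^ 2 - q) * x) := by
  have cancel_q (m : K) : q * m * (q⁻¹ * x) = m * x := by field_simp
  have denominator : (q * (q⁻¹ * x) ^ 2 - 1) * (q⁻¹ * x) = (x ^ 2 - q) * x / q ^ 2 := by
    field_simp
  simp only [xiTwo, cancel_q, denominator, div_div_eq_mul_div, mul_comm (q ^ 2)]

lemma qPlus_mul (hq : q ≠ 0) (hx : x ≠ 0) (s : ι → K) :
    qPlus s (q * x) = ∏ j, -((q * x - s j) * (q * x * s j - 1)) / (q * x) := by
  refine Finset.prod_congr rfl fun j _ => ?_
  field_simp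
  ring

lemma qPlus_inv_mul (hq : q ≠ 0) (hx : x ≠ 0) (s : ι → K) :
    qPlus s (q⁻¹ * x) = ∏ j, -((x - q * s j) * (x * s j - q)) / (q * x) := by
  refine Finset.prod_congr rfl fun j _ => ?_
  field_simp
  ring

lemma lam_eq (hq : q ≠ 0) (hx : x ≠ 0) (γ : K) (a : ι → K) :
    lam q γ a x = γ * ∏ l, (a l - x) * (a l * q * x - 1) / (q * x) := by
  refine congrArg (γ * ·) (Finset.prod_congr rfl fun l _ => ?_)
  field_simp
  ring

lemma lam_inv_mul (hq : q ≠ 0) (hx : x ≠ 0) (γ : K) (a : ι → K) :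
    lam q γ a (q⁻¹ * x) = γ * ∏ l, (a l * x - 1) * (a l * q - x) / (q * x) := by
  refine congrArg (γ * ·) (Finset.prod_congr rfl fun l _ => ?_)
  field_simp
  ring

lemma xiTwo_inv_mul_ne_zero {μ μt b bt : K} (hq : q ≠ 0) (hx : x ≠ 0) (hxq : x ^ 2 - q ≠ 0)
    (hμ : μ * x - 1 ≠ 0) (hμt : μt * x - 1 ≠ 0) (hb : b * x + 1 ≠ 0) (hbt : bt * x + 1 ≠ 0) :
    xiTwo q μ μt b bt (q⁻¹ * x) ≠ 0 := by
  rw [xiTwo_inv_mul hq]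
  positivity

lemma qPlus_inv_mul_ne_zero {s : ι → K} (hq : q ≠ 0) (hx : x ≠ 0)
    (hqs : ∀ j, x - q * s j ≠ 0) (hxs : ∀ j, x * s j - q ≠ 0) :
    qPlus s (q⁻¹ * x) ≠ 0 := by
  rw [qPlus_inv_mul hq hx]
  exact Finset.prod_ne_zero_iff.mpr fun j _ =>
    div_ne_zero (neg_ne_zero.mpr (mul_ne_zero (hqs j) (hxs j))) (mul_ne_zero hq hx)

lemma lam_ne_zero {γ : K} {a : ι → K} (hq : q ≠ 0) (hx : x ≠ 0) (hγ : γ ≠ 0)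
    (hax : ∀ l, a l - x ≠ 0) (haqx : ∀ l, a l * q * x - 1 ≠ 0) :
    lam q γ a x ≠ 0 := by
  rw [lam_eq hq hx]
  exact mul_ne_zero hγ <| Finset.prod_ne_zero_iff.mpr fun l _ =>
    div_ne_zero (mul_ne_zero (hax l) (haqx l)) (mul_ne_zero hq hx)

lemma xiOne_div_xiTwo_inv_mul (hq : q ≠ 0) (hx : x ≠ 0) (μ μt b bt : K) :
    xiOne q μ μt b bt x / xiTwo q μ μt b bt (q⁻¹ * x) =
      (x ^ 2 - q) / (q * x ^ 2 - 1) *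
        ((x - μ) * (x - μt) / ((μ * x - 1) * (μt * x - 1))) *
        ((x + b) * (x + bt) / ((b * x + 1) * (bt * x + 1))) := by
  rw [xiTwo_inv_mul hq, xiOne]
  field_simp

lemma qPlus_mul_div_qPlus_inv_mul (hq : q ≠ 0) (hx : x ≠ 0) (s : ι → K) :
    qPlus s (q * x) / qPlus s (q⁻¹ * x) =
      ∏ j, (q * x - s j) * (q * x * s j - 1) / ((x - q * s j) * (x * s j - q)) := by
  simp only [qPlus_mul hq hx, qPlus_inv_mul hq hx, ← Finset.prod_div_distrib,
    div_div_div_cancel_right₀ (mul_ne_zero hq hx), neg_div_neg_eq]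

lemma lam_inv_mul_div_lam {γ : K} (hq : q ≠ 0) (hx : x ≠ 0) (hγ : γ ≠ 0) (a : ι → K) :
    lam q γ a (q⁻¹ * x) / lam q γ a x =
      ∏ l, (a l * x - 1) * (a l * q - x) / ((a l - x) * (a l * q * x - 1)) := by
  simp only [lam_inv_mul hq hx, lam_eq hq hx, mul_div_mul_left _ _ hγ,
    ← Finset.prod_div_distrib, div_div_div_cancel_right₀ (mul_ne_zero hq hx)]

end BetheRelation

theorem stmt_6_general {K ι κ : Type*} [Field K] [Fintype ι] [Fintype κ]
    {q μ μt b bt γ x : K} {a : κ → K} {s : ι → K} (hq : q ≠ 0) (hγ : γ ≠ 0) (hx : x ≠ 0)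
    (_hqx : q * x ^ 2 - 1 ≠ 0) (hxq : x ^ 2 - q ≠ 0)
    (hμ : μ * x - 1 ≠ 0) (hμt : μt * x - 1 ≠ 0) (hb : b * x + 1 ≠ 0) (hbt : bt * x + 1 ≠ 0)
    (hqs : ∀ j, x - q * s j ≠ 0) (hxs : ∀ j, x * s j - q ≠ 0)
    (hax : ∀ l, a l - x ≠ 0) (haqx : ∀ l, a l * q * x - 1 ≠ 0) :
    -(xiOne q μ μt b bt x * qPlus s (q * x) * lam q γ a (q⁻¹ * x)) =
        xiTwo q μ μt b bt (q⁻¹ * x) * qPlus s (q⁻¹ * x) * lam q γ a x ↔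
      (x ^ 2 - q) / (q * x ^ 2 - 1) *
          ((x - μ) * (x - μt) / ((μ * x - 1) * (μt * x - 1))) *
          ((x + b) * (x + bt) / ((b * x + 1) * (bt * x + 1))) *
          (∏ j, (q * x - s j) * (q * x * s j - 1) / ((x - q * s j) * (x * s j - q))) *
          (∏ l, (a l * x - 1) * (a l * q - x) / ((a l - x) * (a l * q * x - 1))) = -1 := by
  have rhs_ne_zero : xiTwo q μ μt b bt (q⁻¹ * x) * qPlus s (q⁻¹ * x) * lam q γ a x ≠ 0 :=
    mul_ne_zero
      (mul_ne_zero (xiTwo_inv_mul_ne_zero hq hx hxq hμ hμt hb hbt)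
        (qPlus_inv_mul_ne_zero hq hx hqs hxs))
      (lam_ne_zero hq hx hγ hax haqx)
  rw [← xiOne_div_xiTwo_inv_mul hq hx, ← qPlus_mul_div_qPlus_inv_mul hq hx,
    ← lam_inv_mul_div_lam hq hx hγ, ← mul_div_mul_comm, ← mul_div_mul_comm,
    div_eq_iff rhs_ne_zero, neg_one_mul, neg_eq_iff_eq_neg]

/-- the Bethe relation for reflection-invariant generalized Z-twisted
(GL(2),q)-opers with a simple (tame) pole at zero is equivalent to the
Yang–Nepomechie–Zhang open gl₂ XXZ Bethe equations with generic boundary conditions. -/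
theorem stmt_6 (q μ μt b bt γ : ℂ) (hq : q ≠ 0) (hμ : μ ≠ 0) (hμt : μt ≠ 0)
    (hb : b ≠ 0) (hbt : bt ≠ 0) (hγ : γ ≠ 0)
    (n k : ℕ) (a : Fin n → ℂ) (s : Fin k → ℂ)
    (ha : ∀ l, a l ≠ 0) (hs : ∀ j, s j ≠ 0) (i : Fin k)
    (h1 : q * s i ^ 2 - 1 ≠ 0) (h2 : s i ^ 2 - q ≠ 0)
    (h3 : μ * s i - 1 ≠ 0) (h4 : μt * s i - 1 ≠ 0)
    (h5 : b * s i + 1 ≠ 0) (h6 : bt * s i + 1 ≠ 0)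
    (h7 : ∀ j, s i - q * s j ≠ 0) (h8 : ∀ j, s i * s j - q ≠ 0)
    (h9 : ∀ l, a l - s i ≠ 0) (h10 : ∀ l, a l * q * s i - 1 ≠ 0) :
    (let ξ₁ : ℂ → ℂ := fun w =>
       q ^ 2 * (w - μ) * (w - μt) * (w + b) * (w + bt) / ((q * w ^ 2 - 1) * w);
     let ξ₂ : ℂ → ℂ := fun w =>
       (q * μ * w - 1) * (q * μt * w - 1) * (q * b * w + 1) * (q * bt * w + 1) /
         ((q * w ^ 2 - 1) * w);
     let Qp : ℂ → ℂ := fun w => ∏ j, (w - s j) * (w⁻¹ - s j);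
     let Lam : ℂ → ℂ := fun w => γ * ∏ l, (w - a l) * ((q * w)⁻¹ - a l);
     -(ξ₁ (s i) * Qp (q * s i) * Lam (q⁻¹ * s i)) =
       ξ₂ (q⁻¹ * s i) * Qp (q⁻¹ * s i) * Lam (s i)) ↔
    (s i ^ 2 - q) / (q * s i ^ 2 - 1) *
        ((s i - μ) * (s i - μt) / ((μ * s i - 1) * (μt * s i - 1))) *
        ((s i + b) * (s i + bt) / ((b * s i + 1) * (bt * s i + 1))) *
        (∏ j, (q * s i - s j) * (q * s i * s j - 1) /
          ((s i - q * s j) * (s i * s j - q))) *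
        (∏ l, (a l * s i - 1) * (a l * q - s i) /
          ((a l - s i) * (a l * q * s i - 1))) = -1 :=
  stmt_6_general hq hγ (hs i) h1 h2 h3 h4 h5 h6 h7 h8 h9 h10
end

section
/- Fix N ≥ 2, a nonzero q ∈ ℂ, functions ξ₁, …, ξ_N : ℂ \ {0} → ℂ and s₁, …, s_N : ℂ \ {0} → ℂ. For a set of row indices R = {r₁ < r₂ < ⋯ < r_m} ⊆ {1, …, N} and z ∈ ℂ \ {0}, let M_R(z) be the m×m complex matrix whose (i,j) entry is (∏_{t=1}^{j−1} ξ_{r_i}(q^{m−1−t} z)) · s_{r_i}(q^{m−j} z), the product being empty (equal to 1) for j = 1. Define Q₊_m(z) = det M_{{N−m+1, …, N}}(z) for 1 ≤ m ≤ N, set Q₊₀(z) = 1, and define Q₋_m(z) = det M_{{N−m} ∪ {N−m+2, …, N}}(z) for 1 ≤ m ≤ N−1. Then for every 1 ≤ k ≤ N−1 and every z ∈ ℂ \ {0} such that ξ_r(q^{k−1}z) ≠ 0 for all r ∈ {N−k+2, …, N}, the GL(N) QQ-system relation holds: ξ_{N−k+1}(q^{k−1}z)·Q₊_k(z)·Q₋_k(qz)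 − ξ_{N−k}(q^{k−1}z)·Q₊_k(qz)·Q₋_k(z) = Q₊_{k−1}(qz)·Q₊_{k+1}(z). -/
/-- The q-Wronskian-type matrix `M_R(z)` of a generalized Z-twisted Miura (GL(N),q)-oper
with diagonal twist entries `ξ` and section components `s` (indexed 1-based), for a
row-label function `r : Fin m → ℕ`.  Its (i,j) entry (0-indexed) is
`(∏_{t=1}^{j} ξ_{r i}(q^{m−1−t} z)) · s_{r i}(q^{m−1−j} z)`. -/
noncomputable def Mwr (q : ℂ) (ξ s : ℕ → ℂ → ℂ) (m : ℕ) (r : Fin m → ℕ) (z : ℂ) :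
    Matrix (Fin m) (Fin m) ℂ :=
  Matrix.of fun i j =>
    (∏ t ∈ Finset.range j.val, ξ (r i) (q ^ (m - 2 - t) * z)) *
      s (r i) (q ^ (m - 1 - j.val) * z)

/-- `Q₊_m(z) = det M_{{N−m+1,…,N}}(z)`, with `Q₊_0 = 1` (1-based row labels). -/
noncomputable def Qplus (q : ℂ) (ξ s : ℕ → ℂ → ℂ) (N m : ℕ) (z : ℂ) : ℂ :=
  if m = 0 then 1 else (Mwr q ξ s m (fun i => N - m + 1 + i.val) z).det

/-- `Q₋_m(z) = det M_{{N−m} ∪ {N−m+2,…,N}}(z)` (1-based row labels). -/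
noncomputable def Qminus (q : ℂ) (ξ s : ℕ → ℂ → ℂ) (N m : ℕ) (z : ℂ) : ℂ :=
  (Mwr q ξ s m (fun i => if i.val = 0 then N - m else N - m + 1 + i.val) z).det

/-!
The Desnanot–Jacobi identity, for rows `0, 1` and columns `0, last` of `M_{{N−k,…,N}}(z)`, is the
QQ-relation multiplied by `∏ ξ_r(q^{k−1}z)` over `r ∈ {N−k+2,…,N}`: deleting the last column of a
q-Wronskian matrix replaces `z` by `qz`, while deleting the first one pulls the factor
`ξ_r(q^{k−1}z)` out of each row `r`. The product can be cancelled even where it vanishes, because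
the relation is polynomial in the factors `ξ_r(q^{k−1}z)`, which may be shifted by an
indeterminate.
-/

open Matrix Polynomial

section Jacobi

variable {R m n p : Type*} [CommRing R] [Fintype m] [Fintype n] [Fintype p]
  [DecidableEq m] [DecidableEq n] [DecidableEq p]

theorem det_mul_det_toBlocks₁₁_of_mul_eq_smul_one {A B : Matrix (m ⊕ n) (m ⊕ n) R} {d : R}
    (hAB : A * B = d • 1) :
    A.det * B.toBlocks₁₁.det = d ^ Fintype.card m * A.toBlocks₂₂.det := by
  have hblocks := hAB
  rw [← fromBlocks_toBlocks A, ← fromBlocks_toBlocks B, fromBlocks_multiply, ← fromBlocks_one,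
    fromBlocks_smul, fromBlocks_inj] at hblocks
  obtain ⟨h₁₁, -, h₂₁, -⟩ := hblocks
  have hprod : A * fromBlocks B.toBlocks₁₁ 0 B.toBlocks₂₁ 1 =
      fromBlocks (d • 1) A.toBlocks₁₂ 0 A.toBlocks₂₂ := by
    conv_lhs => rw [← fromBlocks_toBlocks A]
    rw [fromBlocks_multiply, h₁₁, h₂₁]
    simp
  simpa using congrArg det hprod

theorem sign_mul_det_mul_det_adjugate_submatrix (M : Matrix p p R) (e f : m ⊕ n ≃ p) :
    Equiv.Perm.sign (e.symm.trans f) * M.det *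
        (M.adjugate.submatrix (f ∘ Sum.inl) (e ∘ Sum.inl)).det =
      M.det ^ Fintype.card m * (M.submatrix (e ∘ Sum.inr) (f ∘ Sum.inr)).det := by
  have hmul : M.submatrix e f * M.adjugate.submatrix f e = M.det • 1 := by
    rw [submatrix_mul_equiv, mul_adjugate, ← submatrix_one_equiv e]
    rfl
  have hdet : (M.submatrix e f).det = Equiv.Perm.sign (e.symm.trans f) * M.det := by
    rw [← det_permute', ← det_submatrix_equiv_self e, submatrix_submatrix]
    congr 2
    ext i
    simp
  rw [← hdet]
  exact det_mul_det_toBlocks₁₁_of_mul_eq_smul_one hmul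

theorem jacobi_complementary_minor (M : Matrix p p R) (e f : m ⊕ n ≃ p) {k : ℕ}
    (hk : Fintype.card m = k + 1) :
    Equiv.Perm.sign (e.symm.trans f) * (M.adjugate.submatrix (f ∘ Sum.inl) (e ∘ Sum.inl)).det =
      M.det ^ k * (M.submatrix (e ∘ Sum.inr) (f ∘ Sum.inr)).det := by
  let G := mvPolynomialX p p ℤ
  have hG : (Equiv.Perm.sign (e.symm.trans f) : MvPolynomial (p × p) ℤ) *
      (G.adjugate.submatrix (f ∘ Sum.inl) (e ∘ Sum.inl)).det =
        G.det ^ k * (G.submatrix (e ∘ Sum.inr) (f ∘ Sum.inr)).det := by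
    refine mul_left_cancel₀ (det_mvPolynomialX_ne_zero p ℤ) ?_
    have h := sign_mul_det_mul_det_adjugate_submatrix G e f
    rw [hk, pow_succ'] at h
    linear_combination h
  let φ := MvPolynomial.eval₂Hom (Int.castRingHom R) fun ij : p × p => M ij.1 ij.2
  have hφ : G.map φ = M := mvPolynomialX_map_eval₂ _ M
  have hadj : G.adjugate.map φ = M.adjugate := by
    rw [← hφ]
    exact φ.map_adjugate G
  simpa only [map_mul, map_pow, map_intCast, RingHom.map_det, RingHom.mapMatrix_apply,
    ← submatrix_map, hφ, hadj] using congrArg φ hG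

end Jacobi

section DesnanotJacobi

variable {R : Type*} [CommRing R] {n : ℕ}

theorem desnanot_jacobi_zero_one_zero_last (M : Matrix (Fin (n + 2)) (Fin (n + 2)) R) :
    (M.submatrix Fin.succ Fin.succ).det *
        (M.submatrix (Fin.succAbove 1) Fin.castSucc).det -
      (M.submatrix Fin.succ Fin.castSucc).det *
        (M.submatrix (Fin.succAbove 1) Fin.succ).det =
      (M.submatrix (fun i : Fin n => i.succ.succ) (fun j : Fin n => j.castSucc.succ)).det *
        M.det := by
  let e : Fin 2 ⊕ Fin n ≃ Fin (n + 2) := finSumFinEquiv.trans (finCongr (add_comm 2 n))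
  let f : Fin 2 ⊕ Fin n ≃ Fin (n + 2) := e.trans (finRotate (n + 2)).symm
  have e_zero : e (Sum.inl 0) = 0 := by ext; simp [e]
  have e_one : e (Sum.inl 1) = 1 := by ext; simp [e]
  have e_inr : e ∘ Sum.inr = fun i : Fin n => i.succ.succ := by ext i; simp [e]
  have f_zero : f (Sum.inl 0) = Fin.last (n + 1) := by
    simp only [f, Equiv.trans_apply, e_zero, Equiv.symm_apply_eq, finRotate_last]
  have f_one : f (Sum.inl 1) = 0 := by
    simp [f, e_one]
  have f_inr : f ∘ Sum.inr = fun j : Fin n => j.castSucc.succ := by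
    funext j
    have hj : e (Sum.inr j) = j.succ.succ := congrFun e_inr j
    simp only [f, Function.comp_apply, Equiv.trans_apply, hj, Equiv.symm_apply_eq,
      finRotate_apply]
    rw [Fin.succ_castSucc, Fin.coeSucc_eq_succ]
  have hsign : Equiv.Perm.sign (e.symm.trans f) = (-1) ^ (n + 1) := by
    simp [f, ← Equiv.trans_assoc, sign_finRotate]
  have hjacobi := jacobi_complementary_minor M e f (k := 1) (by simp)
  simp only [hsign, e_inr, f_inr, det_fin_two, submatrix_apply, Function.comp_apply, e_zero, e_one,
    f_zero, f_one, adjugate_fin_succ_eq_det_submatrix, Fin.succAbove_last, Fin.val_zero,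
    Fin.val_one, Fin.val_last, Fin.succAbove_zero] at hjacobi ⊢
  push_cast at hjacobi
  have hsq : (-1 : R) ^ (n * 2) = 1 := by simp
  ring_nf at hjacobi ⊢
  simpa only [hsq, mul_one] using hjacobi

theorem desnanot_jacobi_row_scaled_of_isLeftRegular {M : Matrix (Fin (n + 2)) (Fin (n + 2)) R}
    {d : Fin (n + 2) → R} {B : Matrix (Fin (n + 2)) (Fin (n + 1)) R}
    (hM : ∀ i j, M i j.succ = d i * B i j)
    (hd : IsLeftRegular (∏ i : Fin n, d i.succ.succ)) :
    d 1 * (B.submatrix Fin.succ id).det *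
        (M.submatrix (Fin.succAbove 1) Fin.castSucc).det -
      d 0 * (M.submatrix Fin.succ Fin.castSucc).det *
        (B.submatrix (Fin.succAbove 1) id).det =
      (B.submatrix (fun i : Fin n => i.succ.succ) Fin.castSucc).det * M.det := by
  have det_scaled {m : ℕ} (r : Fin m → Fin (n + 2)) (c : Fin m → Fin (n + 1)) :
      (M.submatrix r (Fin.succ ∘ c)).det = (∏ i, d (r i)) * (B.submatrix r c).det := by
    rw [← det_mul_column]
    congr 1
    ext i j
    exact hM _ _
  have hzero : (M.submatrix Fin.succ Fin.succ).det =
      d 1 * (∏ i : Fin n, d i.succ.succ) * (B.submatrix Fin.succ id).det := by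
    simpa [Fin.prod_univ_succ] using det_scaled Fin.succ id
  have hone : (M.submatrix (Fin.succAbove 1) Fin.succ).det =
      d 0 * (∏ i : Fin n, d i.succ.succ) * (B.submatrix (Fin.succAbove 1) id).det := by
    simpa [Fin.prod_univ_succ] using det_scaled (Fin.succAbove 1) id
  have hmid : (M.submatrix (fun i : Fin n => i.succ.succ) (fun j : Fin n => j.castSucc.succ)).det =
      (∏ i : Fin n, d i.succ.succ) *
        (B.submatrix (fun i : Fin n => i.succ.succ) Fin.castSucc).det :=
    det_scaled (fun i : Fin n => i.succ.succ) Fin.castSucc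
  have h := desnanot_jacobi_zero_one_zero_last M
  rw [hzero, hone, hmid] at h
  refine hd ?_
  linear_combination h

theorem desnanot_jacobi_row_scaled {M : Matrix (Fin (n + 2)) (Fin (n + 2)) R} {d : Fin (n + 2) → R}
    {B : Matrix (Fin (n + 2)) (Fin (n + 1)) R} (hM : ∀ i j, M i j.succ = d i * B i j) :
    d 1 * (B.submatrix Fin.succ id).det *
        (M.submatrix (Fin.succAbove 1) Fin.castSucc).det -
      d 0 * (M.submatrix Fin.succ Fin.castSucc).det *
        (B.submatrix (Fin.succAbove 1) id).det =
      (B.submatrix (fun i : Fin n => i.succ.succ) Fin.castSucc).det * M.det := by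
  let d' : Fin (n + 2) → R[X] := fun i => X + C (d i)
  let M' : Matrix (Fin (n + 2)) (Fin (n + 2)) R[X] :=
    of fun i => Fin.cons (C (M i 0)) fun j => d' i * C (B i j)
  have hM' : ∀ i j, M' i j.succ = d' i * B.map C i j := fun _ _ => rfl
  have hd' : IsLeftRegular (∏ i : Fin n, d' i.succ.succ) :=
    (monic_prod_of_monic _ _ fun _ _ => monic_X_add_C _).isRegular.left
  let ev : R[X] →+* R := evalRingHom 0
  have ev_d' (i) : ev (d' i) = d i := by simp [ev, d']
  have ev_B : (B.map C).map ev = B := by ext; simp [ev]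
  have ev_M' : M'.map ev = M := by
    ext i j
    refine Fin.cases ?_ (fun j => ?_) j
    · simp [M', ev]
    · rw [map_apply, hM', map_mul, ev_d', hM]
      simp [ev]
  simpa only [map_sub, map_mul, RingHom.map_det, RingHom.mapMatrix_apply, ← submatrix_map, ev_d',
    ev_B, ev_M'] using congrArg ev (desnanot_jacobi_row_scaled_of_isLeftRegular hM' hd')

end DesnanotJacobi

section QWronskian

variable {R : Type*}

/-- The q-Wronskian matrix with `m` columns of the sections `f i` with twists `x i`. The rows are
indexed by an arbitrary type, so that minors with `m` rows are taken by `Matrix.submatrix`; `Mwr` is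
the square case. Since `t < j < m`, neither exponent is truncated. -/
def qWronskian [CommSemiring R] {ι : Type*} (q : R) (x f : ι → R → R) (m : ℕ) (z : R) :
    Matrix ι (Fin m) R :=
  of fun i j => (∏ t ∈ Finset.range j, x i (q ^ (m - 2 - t) * z)) * f i (q ^ (m - 1 - j) * z)

theorem qWronskian_castSucc [CommSemiring R] {ι : Type*} (q : R) (x f : ι → R → R) (m : ℕ) (z : R)
    (i : ι) (j : Fin m) :
    qWronskian q x f (m + 1) z i j.castSucc = qWronskian q x f m (q * z) i j := by
  have hpow (a : ℕ) : q ^ a * (q * z) = q ^ (a + 1) * z := by ring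
  have hprod : ∀ t ∈ Finset.range j, m + 1 - 2 - t = m - 2 - t + 1 := by
    intro t ht
    have := Finset.mem_range.1 ht
    omega
  have hlast : m + 1 - 1 - j = m - 1 - j + 1 := by omega
  simp only [qWronskian, of_apply, Fin.val_castSucc, hpow, hlast]
  exact congrArg (· * _) (Finset.prod_congr rfl fun t ht => by rw [hprod t ht])

theorem qWronskian_succ [CommSemiring R] {ι : Type*} (q : R) (x f : ι → R → R) (m : ℕ) (z : R)
    (i : ι) (j : Fin m) :
    qWronskian q x f (m + 1) z i j.succ = x i (q ^ (m - 1) * z) * qWronskian q x f m z i j := by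
  have hfirst : m + 1 - 2 - 0 = m - 1 := by omega
  have hprod (t : ℕ) : m + 1 - 2 - (t + 1) = m - 2 - t := by omega
  have hlast : m + 1 - 1 - (j + 1) = m - 1 - j := by omega
  simp only [qWronskian, of_apply, Fin.val_succ, Finset.prod_range_succ', hfirst, hprod, hlast]
  ring

theorem qWronskian_qq_relation [CommRing R] {n : ℕ} (q : R) (x f : Fin (n + 2) → R → R) (z : R) :
    x 1 (q ^ n * z) * ((qWronskian q x f (n + 1) z).submatrix Fin.succ id).det *
        ((qWronskian q x f (n + 1) (q * z)).submatrix (Fin.succAbove 1) id).det -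
      x 0 (q ^ n * z) * ((qWronskian q x f (n + 1) (q * z)).submatrix Fin.succ id).det *
        ((qWronskian q x f (n + 1) z).submatrix (Fin.succAbove 1) id).det =
      ((qWronskian q x f n (q * z)).submatrix (fun i : Fin n => i.succ.succ) id).det *
        (qWronskian q x f (n + 2) z).det := by
  have hshift (m : ℕ) {l : ℕ} (r : Fin l → Fin (n + 2)) :
      (qWronskian q x f (m + 1) z).submatrix r Fin.castSucc =
        (qWronskian q x f m (q * z)).submatrix r id := by
    ext
    exact qWronskian_castSucc ..
  simpa only [hshift, Nat.add_sub_cancel] using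
    desnanot_jacobi_row_scaled (qWronskian_succ q x f (n + 1) z)

end QWronskian

theorem Qplus_eq_det (q : ℂ) (ξ s : ℕ → ℂ → ℂ) (N m : ℕ) (z : ℂ) :
    Qplus q ξ s N m z = (Mwr q ξ s m (fun i => N - m + 1 + i) z).det := by
  unfold Qplus
  split_ifs with hm
  · subst hm
    exact det_fin_zero.symm
  · rfl

theorem stmt_9_general (N : ℕ) (q : ℂ) (ξ s : ℕ → ℂ → ℂ) (k : ℕ) (hk : 1 ≤ k) (hkN : k < N)
    (z : ℂ) :
    ξ (N - k + 1) (q ^ (k - 1) * z) * Qplus q ξ s N k z * Qminus q ξ s N k (q * z) -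
      ξ (N - k) (q ^ (k - 1) * z) * Qplus q ξ s N k (q * z) * Qminus q ξ s N k z =
    Qplus q ξ s N (k - 1) (q * z) * Qplus q ξ s N (k + 1) z := by
  obtain ⟨n, rfl⟩ := Nat.exists_eq_add_of_le' hk
  let r : Fin (n + 2) → ℕ := fun i => N - (n + 1) + i
  have labels_plus : (fun i : Fin (n + 1) => N - (n + 1) + 1 + i) = r ∘ Fin.succ := by
    ext i; simp only [r, Function.comp_apply, Fin.val_succ]; omega
  have labels_minus : (fun i : Fin (n + 1) => if i.val = 0 then N - (n + 1)
      else N - (n + 1) + 1 + i) = r ∘ Fin.succAbove 1 := by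
    ext i; refine Fin.cases ?_ (fun i => ?_) i
    · simp [r]
    · simp only [r, Function.comp_apply, Fin.one_succAbove_succ, Fin.val_succ, Nat.succ_ne_zero,
        if_false]
      omega
  have labels_pred : (fun i : Fin n => N - n + 1 + i) = r ∘ fun i => i.succ.succ := by
    ext i; simp only [r, Function.comp_apply, Fin.val_succ]; omega
  have labels_succ : (fun i : Fin (n + 2) => N - (n + 2) + 1 + i) = r := by
    ext i; simp only [r]; omega
  simp only [Qplus_eq_det, Qminus, Nat.add_sub_cancel, labels_plus, labels_minus, labels_pred,
    labels_succ]
  exact qWronskian_qq_relation q (ξ ∘ r) (s ∘ r) z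

/-- the generalized minors of the q-Wronskian matrices of a generalized
Z-twisted Miura (GL(N),q)-oper satisfy the GL(N) QQ-system. -/
theorem stmt_9 (N : ℕ) (hN : 2 ≤ N) (q : ℂ) (hq : q ≠ 0) (ξ s : ℕ → ℂ → ℂ)
    (k : ℕ) (hk1 : 1 ≤ k) (hk2 : k ≤ N - 1) (z : ℂ) (hz : z ≠ 0)
    (hξ : ∀ r : ℕ, N - k + 2 ≤ r → r ≤ N → ξ r (q ^ (k - 1) * z) ≠ 0) :
    ξ (N - k + 1) (q ^ (k - 1) * z) * Qplus q ξ s N k z * Qminus q ξ s N k (q * z) -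
      ξ (N - k) (q ^ (k - 1) * z) * Qplus q ξ s N k (q * z) * Qminus q ξ s N k z =
    Qplus q ξ s N (k - 1) (q * z) * Qplus q ξ s N (k + 1) z :=
  stmt_9_general N q ξ s k hk1 (by omega) z
end

section
/- Fix N ≥ 2, a nonzero q ∈ ℂ, 1 ≤ k ≤ N−1, functions ξ_{N−k}, ξ_{N−k+1} : ℂ \ {0} → ℂ, natural numbers p_{k−1}, p_k, p_{k+1}, and nonzero complex numbers s_{m,j} for m ∈ {k−1, k, k+1}, 1 ≤ j ≤ p_m. For each such m define Q₊_m(z) = ∏_{j=1}^{p_m}(z − s_{m,j})(1/(q^{m−1}z) − s_{m,j}) (with Q₊₀(z) = 1 if k = 1). Fix 1 ≤ i ≤ p_k and write s = s_{k,i}; assume every factor occurring in a denominator below is nonzero. Then the Bethe relation −(ξ_{N−k+1}(q^{k−2}s)/ξ_{N−k}(q^{k−1}s)) · (Q₊_{k−1}(qs)Q₊_k(q⁻¹s)Q₊_{k+1}(s))/(Q₊_{k−1}(s)Q₊_k(qs)Q₊_{k+1}(q⁻¹s)) = 1 holds if and only if −(ξ_{N−k+1}(q^{k−2}s)/ξ_{N−k}(q^{k−1}s))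 · q^{p_k} ∏_{j=1}^{p_k} ((q^{k−2}s·s_{k,j}−1)(s−q·s_{k,j}))/((q^{k}s·s_{k,j}−1)(q s−s_{k,j})) = q^{p_{k−1}} ∏_{j=1}^{p_{k−1}} ((q^{k−2}s·s_{k−1,j}−1)(s−s_{k−1,j}))/((q^{k−1}s·s_{k−1,j}−1)(q s−s_{k−1,j})) · ∏_{j=1}^{p_{k+1}} ((q^{k−1}s·s_{k+1,j}−1)(s−q·s_{k+1,j}))/((q^{k}s·s_{k+1,j}−1)(s−s_{k+1,j})). -/
/-- The reflection-symmetric Laurent polynomial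
`Q₊_m(z) = ∏_j (z − root j) · (1/(q^{m−1} z) − root j)`. -/
noncomputable def QL (q : ℂ) (m : ℕ) {p : ℕ} (root : Fin p → ℂ) (z : ℂ) : ℂ :=
  ∏ j, (z - root j) * ((q ^ ((m : ℤ) - 1) * z)⁻¹ - root j)

/-!
For `w = q ^ (m - 1) * z` the reflected factor is `w⁻¹ - r = -w⁻¹ * (w * r - 1)`, so `Q₊_m(z)` is
`(-w)⁻¹ ^ p` times a product of polynomial factors. In the quotients of two values of the same
`Q₊_m` at `s`, `q * s`, `q⁻¹ * s`, these prefactors leave `q ^ p`, or cancel for the pair `s`,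
`q⁻¹ * s`. The Bethe relation only involves such quotients.
-/

section ClosedForms

variable {q s z : ℂ} {p : ℕ}

theorem QL_eq_inv_pow_mul_prod (hq : q ≠ 0) (hz : z ≠ 0) (m : ℕ) (r : Fin p → ℂ) :
    QL q m r z = (-(q ^ ((m : ℤ) - 1) * z))⁻¹ ^ p *
      ∏ j, (q ^ ((m : ℤ) - 1) * z * r j - 1) * (z - r j) := by
  have hqz : q ^ ((m : ℤ) - 1) * z ≠ 0 := mul_ne_zero (zpow_ne_zero _ hq) hz
  rw [QL, ← Fin.prod_const, ← Finset.prod_mul_distrib]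
  refine Finset.prod_congr rfl fun j _ ↦ ?_
  generalize q ^ ((m : ℤ) - 1) * z = w at hqz ⊢
  field_simp
  ring

theorem QL_mul_eq_inv_pow_mul_prod (hq : q ≠ 0) (hs : s ≠ 0) (m : ℕ) (r : Fin p → ℂ) :
    QL q m r (q * s) = (-(q ^ (m : ℤ) * s))⁻¹ ^ p *
      ∏ j, (q ^ (m : ℤ) * s * r j - 1) * (q * s - r j) := by
  have hshift : q ^ ((m : ℤ) - 1) * (q * s) = q ^ (m : ℤ) * s := by
    rw [← mul_assoc, ← zpow_add_one₀ hq, sub_add_cancel]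
  rw [QL_eq_inv_pow_mul_prod hq (mul_ne_zero hq hs), hshift]

-- The factor `q⁻¹` of `q⁻¹ * s - r j = q⁻¹ * (s - q * r j)` is absorbed by the power in front.
theorem QL_inv_mul_eq_inv_pow_mul_prod (hq : q ≠ 0) (hs : s ≠ 0) (m : ℕ) (r : Fin p → ℂ) :
    QL q m r (q⁻¹ * s) = (-(q ^ ((m : ℤ) - 1) * s))⁻¹ ^ p *
      ∏ j, (q ^ ((m : ℤ) - 2) * s * r j - 1) * (s - q * r j) := by
  have hpow : q ^ ((m : ℤ) - 1) = q ^ ((m : ℤ) - 2) * q := by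
    rw [← zpow_add_one₀ hq]
    congr 1
    ring
  have hshift : q ^ ((m : ℤ) - 1) * (q⁻¹ * s) = q ^ ((m : ℤ) - 2) * s := by
    rw [hpow, mul_assoc, mul_inv_cancel_left₀ hq]
  rw [QL_eq_inv_pow_mul_prod hq (mul_ne_zero (inv_ne_zero hq) hs), hshift, hpow]
  simp only [← Fin.prod_const, ← Finset.prod_mul_distrib]
  refine Finset.prod_congr rfl fun j _ ↦ ?_
  have hroot : q⁻¹ * s - r j = q⁻¹ * (s - q * r j) := by field_simp
  rw [hroot, mul_right_comm _ q s, ← neg_mul, mul_inv]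
  ring

end ClosedForms

theorem inv_pow_neg_zpow_mul_ne_zero {K : Type*} [Field K] {q z : K} (hq : q ≠ 0) (hz : z ≠ 0)
    (n : ℤ) (p : ℕ) : (-(q ^ n * z))⁻¹ ^ p ≠ 0 :=
  pow_ne_zero _ (inv_ne_zero (neg_ne_zero.2 (mul_ne_zero (zpow_ne_zero _ hq) hz)))

section Nonvanishing

variable {q s z : ℂ} {p m : ℕ} {r : Fin p → ℂ}

theorem QL_ne_zero (hq : q ≠ 0) (hz : z ≠ 0) (hr : ∀ j, z - r j ≠ 0)
    (hr' : ∀ j, q ^ ((m : ℤ) - 1) * z * r j - 1 ≠ 0) : QL q m r z ≠ 0 := by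
  rw [QL_eq_inv_pow_mul_prod hq hz]
  exact mul_ne_zero (inv_pow_neg_zpow_mul_ne_zero hq hz _ _)
    (Finset.prod_ne_zero_iff.2 fun j _ ↦ mul_ne_zero (hr' j) (hr j))

theorem QL_mul_ne_zero (hq : q ≠ 0) (hs : s ≠ 0) (hr : ∀ j, q * s - r j ≠ 0)
    (hr' : ∀ j, q ^ (m : ℤ) * s * r j - 1 ≠ 0) : QL q m r (q * s) ≠ 0 := by
  rw [QL_mul_eq_inv_pow_mul_prod hq hs]
  exact mul_ne_zero (inv_pow_neg_zpow_mul_ne_zero hq hs _ _)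
    (Finset.prod_ne_zero_iff.2 fun j _ ↦ mul_ne_zero (hr' j) (hr j))

theorem QL_inv_mul_ne_zero (hq : q ≠ 0) (hs : s ≠ 0) (hr : ∀ j, s - q * r j ≠ 0)
    (hr' : ∀ j, q ^ ((m : ℤ) - 2) * s * r j - 1 ≠ 0) : QL q m r (q⁻¹ * s) ≠ 0 := by
  rw [QL_inv_mul_eq_inv_pow_mul_prod hq hs]
  exact mul_ne_zero (inv_pow_neg_zpow_mul_ne_zero hq hs _ _)
    (Finset.prod_ne_zero_iff.2 fun j _ ↦ mul_ne_zero (hr' j) (hr j))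

end Nonvanishing

theorem inv_pow_neg_zpow_mul_div {K : Type*} [Field K] {q s : K} (hq : q ≠ 0)
    (hs : s ≠ 0) (n : ℤ) (p : ℕ) :
    (-(q ^ (n - 1) * s))⁻¹ ^ p / (-(q ^ n * s))⁻¹ ^ p = q ^ p := by
  rw [← div_pow, inv_div_inv, neg_div_neg_eq, mul_div_mul_right _ _ hs, ← zpow_sub₀ hq,
    sub_sub_cancel, zpow_one]

section Ratios

variable {q s : ℂ} {p : ℕ}

theorem QL_div_QL_mul (hq : q ≠ 0) (hs : s ≠ 0) (m : ℕ) (r : Fin p → ℂ) :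
    QL q m r s / QL q m r (q * s) =
      q ^ p * ∏ j, (q ^ ((m : ℤ) - 1) * s * r j - 1) * (s - r j) /
        ((q ^ (m : ℤ) * s * r j - 1) * (q * s - r j)) := by
  rw [QL_eq_inv_pow_mul_prod hq hs, QL_mul_eq_inv_pow_mul_prod hq hs, mul_div_mul_comm,
    inv_pow_neg_zpow_mul_div hq hs, Finset.prod_div_distrib]

theorem QL_inv_mul_div_QL_mul (hq : q ≠ 0) (hs : s ≠ 0) (m : ℕ) (r : Fin p → ℂ) :
    QL q m r (q⁻¹ * s) / QL q m r (q * s) =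
      q ^ p * ∏ j, (q ^ ((m : ℤ) - 2) * s * r j - 1) * (s - q * r j) /
        ((q ^ (m : ℤ) * s * r j - 1) * (q * s - r j)) := by
  rw [QL_inv_mul_eq_inv_pow_mul_prod hq hs, QL_mul_eq_inv_pow_mul_prod hq hs, mul_div_mul_comm,
    inv_pow_neg_zpow_mul_div hq hs, Finset.prod_div_distrib]

theorem QL_inv_mul_div_QL (hq : q ≠ 0) (hs : s ≠ 0) (m : ℕ) (r : Fin p → ℂ) :
    QL q m r (q⁻¹ * s) / QL q m r s =
      ∏ j, (q ^ ((m : ℤ) - 2) * s * r j - 1) * (s - q * r j) /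
        ((q ^ ((m : ℤ) - 1) * s * r j - 1) * (s - r j)) := by
  rw [QL_inv_mul_eq_inv_pow_mul_prod hq hs, QL_eq_inv_pow_mul_prod hq hs,
    mul_div_mul_left _ _ (inv_pow_neg_zpow_mul_ne_zero hq hs _ _), Finset.prod_div_distrib]

end Ratios

theorem stmt_11_general {q : ℂ} (hq : q ≠ 0) {k : ℕ} (hk1 : 1 ≤ k) (c : ℂ) {pkm pk pkp : ℕ}
    (skm : Fin pkm → ℂ) (sk : Fin pk → ℂ) (skp : Fin pkp → ℂ) {s : ℂ} (hs : s ≠ 0)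
    (hkm : ∀ j, s - skm j ≠ 0) (hkm' : ∀ j, q ^ ((k : ℤ) - 2) * s * skm j - 1 ≠ 0)
    (hkm_mul : ∀ j, q * s - skm j ≠ 0)
    (hkm_mul' : ∀ j, q ^ ((k : ℤ) - 1) * s * skm j - 1 ≠ 0)
    (hk_mul : ∀ j, q * s - sk j ≠ 0) (hk_mul' : ∀ j, q ^ (k : ℤ) * s * sk j - 1 ≠ 0)
    (hkp : ∀ j, s - skp j ≠ 0) (hkp' : ∀ j, q ^ (k : ℤ) * s * skp j - 1 ≠ 0)
    (hkp_inv_mul : ∀ j, s - q * skp j ≠ 0)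
    (hkp_inv_mul' : ∀ j, q ^ ((k : ℤ) - 1) * s * skp j - 1 ≠ 0) :
    c * (QL q (k - 1) skm (q * s) * QL q k sk (q⁻¹ * s) * QL q (k + 1) skp s) /
        (QL q (k - 1) skm s * QL q k sk (q * s) * QL q (k + 1) skp (q⁻¹ * s)) = 1 ↔
    c * q ^ pk *
        ∏ j, (q ^ ((k : ℤ) - 2) * s * sk j - 1) * (s - q * sk j) /
          ((q ^ (k : ℤ) * s * sk j - 1) * (q * s - sk j)) =
      q ^ pkm *
        (∏ j, (q ^ ((k : ℤ) - 2) * s * skm j - 1) * (s - skm j) /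
          ((q ^ ((k : ℤ) - 1) * s * skm j - 1) * (q * s - skm j))) *
        ∏ j, (q ^ ((k : ℤ) - 1) * s * skp j - 1) * (s - q * skp j) /
          ((q ^ (k : ℤ) * s * skp j - 1) * (s - skp j)) := by
  have pred_cast : ((k - 1 : ℕ) : ℤ) = k - 1 := by omega
  have pred_cast_sub_one : ((k - 1 : ℕ) : ℤ) - 1 = k - 2 := by omega
  have succ_cast_sub_one : ((k + 1 : ℕ) : ℤ) - 1 = k := by omega
  have succ_cast_sub_two : ((k + 1 : ℕ) : ℤ) - 2 = k - 1 := by omega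
  have ratio_pred := QL_div_QL_mul hq hs (k - 1) skm
  have ratio_succ := QL_inv_mul_div_QL hq hs (k + 1) skp
  rw [pred_cast_sub_one, pred_cast] at ratio_pred
  rw [succ_cast_sub_one, succ_cast_sub_two] at ratio_succ
  have pred_ne : QL q (k - 1) skm s ≠ 0 := QL_ne_zero hq hs hkm (by rwa [pred_cast_sub_one])
  have pred_mul_ne : QL q (k - 1) skm (q * s) ≠ 0 :=
    QL_mul_ne_zero hq hs hkm_mul (by rwa [pred_cast])
  have mul_ne : QL q k sk (q * s) ≠ 0 := QL_mul_ne_zero hq hs hk_mul hk_mul'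
  have succ_ne : QL q (k + 1) skp s ≠ 0 := QL_ne_zero hq hs hkp (by rwa [succ_cast_sub_one])
  have succ_inv_mul_ne : QL q (k + 1) skp (q⁻¹ * s) ≠ 0 :=
    QL_inv_mul_ne_zero hq hs hkp_inv_mul (by rwa [succ_cast_sub_two])
  rw [mul_assoc c, ← QL_inv_mul_div_QL_mul hq hs, ← ratio_pred, ← ratio_succ, ← mul_div_assoc,
    div_mul_div_comm, div_eq_div_iff mul_ne (mul_ne_zero pred_mul_ne succ_ne),
    div_eq_one_iff_eq (mul_ne_zero (mul_ne_zero pred_ne mul_ne) succ_inv_mul_ne)]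
  constructor <;> intro h <;> linear_combination h

/-- with the reflection-symmetric `Q₊_m`, the general Bethe relation of the
GL(N) QQ-system is equivalent to the explicit generalized gl_N XXZ Bethe equations for
open spin chains.  Here `ξa = ξ_{N−k}`, `ξb = ξ_{N−k+1}`, and `s = s_{k,i}`. -/
theorem stmt_11 (N : ℕ) (hN : 2 ≤ N) (q : ℂ) (hq : q ≠ 0)
    (k : ℕ) (hk1 : 1 ≤ k) (hk2 : k ≤ N - 1) (ξa ξb : ℂ → ℂ)
    (pkm pk pkp : ℕ) (hp0 : k = 1 → pkm = 0)
    (skm : Fin pkm → ℂ) (sk : Fin pk → ℂ) (skp : Fin pkp → ℂ)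
    (hskm : ∀ j, skm j ≠ 0) (hsk : ∀ j, sk j ≠ 0) (hskp : ∀ j, skp j ≠ 0)
    (i : Fin pk)
    (hξa : ξa (q ^ ((k : ℤ) - 1) * sk i) ≠ 0)
    (e1 : ∀ j, sk i - skm j ≠ 0) (e2 : ∀ j, q * sk i - skm j ≠ 0)
    (e3 : ∀ j, q ^ ((k : ℤ) - 2) * sk i * skm j - 1 ≠ 0)
    (e4 : ∀ j, q ^ ((k : ℤ) - 1) * sk i * skm j - 1 ≠ 0)
    (e5 : ∀ j, q * sk i - sk j ≠ 0)
    (e6 : ∀ j, q ^ (k : ℤ) * sk i * sk j - 1 ≠ 0)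
    (e7 : ∀ j, sk i - skp j ≠ 0)
    (e8 : ∀ j, q ^ (k : ℤ) * sk i * skp j - 1 ≠ 0)
    (e9 : ∀ j, sk i - q * skp j ≠ 0)
    (e10 : ∀ j, q ^ ((k : ℤ) - 1) * sk i * skp j - 1 ≠ 0) :
    (-(ξb (q ^ ((k : ℤ) - 2) * sk i) / ξa (q ^ ((k : ℤ) - 1) * sk i)) *
        (QL q (k - 1) skm (q * sk i) * QL q k sk (q⁻¹ * sk i) * QL q (k + 1) skp (sk i)) /
        (QL q (k - 1) skm (sk i) * QL q k sk (q * sk i) * QL q (k + 1) skp (q⁻¹ * sk i))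
        = 1) ↔
    (-(ξb (q ^ ((k : ℤ) - 2) * sk i) / ξa (q ^ ((k : ℤ) - 1) * sk i)) * q ^ pk *
        ∏ j, (q ^ ((k : ℤ) - 2) * sk i * sk j - 1) * (sk i - q * sk j) /
          ((q ^ (k : ℤ) * sk i * sk j - 1) * (q * sk i - sk j)) =
      q ^ pkm *
        (∏ j, (q ^ ((k : ℤ) - 2) * sk i * skm j - 1) * (sk i - skm j) /
          ((q ^ ((k : ℤ) - 1) * sk i * skm j - 1) * (q * sk i - skm j))) *
        ∏ j, (q ^ ((k : ℤ) - 1) * sk i * skp j - 1) * (sk i - q * skp j) /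
          ((q ^ (k : ℤ) * sk i * skp j - 1) * (sk i - skp j))) :=
  stmt_11_general hq hk1 _ skm sk skp (hsk i) e1 e3 e2 e4 e5 e6 e7 e8 e9 e10
end

section
/- Fix N ≥ 2 and a nonzero q ∈ ℂ. Let ξ₁, …, ξ_N : ℂ \ {0} → ℂ \ {0} be nowhere-vanishing functions, set Z(z) = diag(ξ₁(z), …, ξ_N(z)), and let s : ℂ \ {0} → ℂᴺ be a function with s(1/z) = s(z) for all z ≠ 0. For 1 ≤ k ≤ N define the q-Wronskian D_k(z) as the determinant of the N×N matrix whose first N−k columns are the standard basis vectors e₁, …, e_{N−k} and whose (N−k+j)-th column, for j = 1, …, k, is Z(q^{k−2}z)·Z(q^{k−3}z)⋯Z(q^{k−j}z)·s(q^{k−j}z) (the product of Z's being empty for j = 1, so that column equals s(q^{k−1}z)). Assume that for every 1 ≤ i ≤ N and every z ≠ 0: ξ_i(z)·ξ_i(1/(qz)) = −ξ_N(1/(qz))·ξ_{N−1}(1/(qz)). Then for every 2 ≤ k ≤ N and every z ≠ 0, D_k(1/(q^{k−1}z)) = C_k(z)·D_k(z), where C_k(z) = (−1)^{k(k−1)/2}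 ∏_{j=0}^{k−2} [ (∏_{i=1}^{k} ξ_{N+1−i}(1/(q^{j+1}z))) · (∏_{i=1}^{k−1−j} (−ξ_N(1/(q^{j+i}z))⁻¹ · ξ_{N−1}(1/(q^{j+i}z))⁻¹)) ]. In particular, if C_k(z) = 1 for all z ≠ 0 then D_k(1/(q^{k−1}z)) = D_k(z) for all z ≠ 0. -/
/-- The q-Wronskian `D_k(z)` of a generalized Z-twisted Miura (GL(N),q)-oper in the
diagonal gauge, with diagonal twist entries `ξ` and section components `s` (1-based):
the determinant of the N×N matrix whose first N−k columns are the standard basis vectors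
`e₁, …, e_{N−k}` and whose (N−k+j)-th column (j = 1,…,k) has r-th component
`(∏_{m=k−j}^{k−2} ξ_r(q^m z)) · s_r(q^{k−j} z)`. -/
noncomputable def Dwr (N : ℕ) (q : ℂ) (ξ s : ℕ → ℂ → ℂ) (k : ℕ) (z : ℂ) : ℂ :=
  (Matrix.of fun r c : Fin N =>
    if c.val < N - k then (if r = c then (1 : ℂ) else 0)
    else
      (∏ t ∈ Finset.range (c.val - (N - k)), ξ (r.val + 1) (q ^ (k - 2 - t) * z)) *
        s (r.val + 1) (q ^ (k - 1 - (c.val - (N - k))) * z)).det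

/-- The constant `C_k(z)` relating `D_k(1/(q^{k−1}z))` and `D_k(z)`. -/
noncomputable def Ck (N : ℕ) (q : ℂ) (ξ : ℕ → ℂ → ℂ) (k : ℕ) (z : ℂ) : ℂ :=
  (-1 : ℂ) ^ (k * (k - 1) / 2) *
    ∏ j ∈ Finset.range (k - 1),
      ((∏ i ∈ Finset.range k, ξ (N - i) ((q ^ (j + 1) * z)⁻¹)) *
        ∏ i ∈ Finset.range (k - 1 - j),
          -((ξ N ((q ^ (j + 1 + i) * z)⁻¹))⁻¹ * (ξ (N - 1) ((q ^ (j + 1 + i) * z)⁻¹))⁻¹))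

/-!
The first `N - k` columns of the matrix in `Dwr` are standard basis vectors, so `D_k` is the
`k × k` minor on the last `k` rows and columns. Put `a_r(t) = ξ_r(1/(q^{t+1}z))` and
`b_r(t) = ξ_r(q^t z)`. Because `s` is reflection invariant, the reflected minor has entries
`(∏_{t < c} a_r(t)) s_r(q^c z)`, while the original minor, read with its columns in reverse order,
has entries `(∏_{c ≤ t < k-1} b_r(t)) s_r(q^c z)`. The relation between the `ξ_i` says that
`a_r(t) b_r(t)` does not depend on `r`, so the two matrices differ by a row factor
`∏_{t < k-1} a_r(t)` and a column factor `∏_{c ≤ t < k-1} (a_r(t) b_r(t))⁻¹`; the column reversal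
contributes the sign.
-/

section Products

open Finset

variable {M : Type*} [CommMonoid M]

theorem prod_range_eq_prod_range_mul_of_mul_eq_one {a b v : ℕ → M}
    (habv : ∀ t, a t * b t * v t = 1) {m n : ℕ} (hmn : m ≤ n) :
    ∏ t ∈ range m, a t =
      (∏ t ∈ range n, a t) * ((∏ t ∈ Ico m n, v t) * ∏ t ∈ Ico m n, b t) := by
  have cancel : (∏ t ∈ Ico m n, a t) * ((∏ t ∈ Ico m n, v t) * ∏ t ∈ Ico m n, b t) = 1 := by
    simp only [← prod_mul_distrib]
    exact prod_eq_one fun t _ => by rw [mul_comm (v t), ← mul_assoc, habv]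
  rw [← prod_range_mul_prod_Ico a hmn, mul_assoc, cancel, mul_one]

theorem prod_fin_prod_Ico_eq_prod_range (k : ℕ) (v : ℕ → M) :
    ∏ c : Fin k, ∏ t ∈ Ico (c : ℕ) (k - 1), v t =
      ∏ j ∈ range (k - 1), ∏ i ∈ range (k - 1 - j), v (j + i) := by
  cases k with
  | zero => simp
  | succ l =>
    rw [Nat.add_sub_cancel, Fin.prod_univ_eq_prod_range (fun c => ∏ t ∈ Ico c l, v t),
      prod_range_succ]
    simp [prod_Ico_eq_prod_range]

theorem pow_mul_inv_pow_mul {G : Type*} [CommGroupWithZero G] {q : G} (hq : q ≠ 0) (z : G)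
    {l m n : ℕ} (h : l + m = n) : q ^ l * (q ^ n * z)⁻¹ = (q ^ m * z)⁻¹ := by
  rw [← h, pow_add, mul_assoc, mul_inv, mul_inv_cancel_left₀ (pow_ne_zero l hq)]

end Products

section Determinants

open Finset Matrix

variable {R : Type*} [CommRing R]

theorem sign_revPerm (k : ℕ) :
    Equiv.Perm.sign (Fin.revPerm : Equiv.Perm (Fin k)) = (-1) ^ (k * (k - 1) / 2) := by
  have prod_inversions_below (j : Fin k) :
      (∏ i ∈ Iio j, if Fin.revPerm i < Fin.revPerm j then (1 : ℤˣ) else -1) = (-1) ^ (j : ℕ) := by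
    rw [prod_congr rfl fun i hi => if_neg ?_, prod_const, Fin.card_Iio]
    simpa using (mem_Iio.1 hi).le
  rw [Equiv.Perm.sign_eq_prod_prod_Iio, prod_congr rfl fun j _ => prod_inversions_below j,
    Fin.prod_univ_eq_prod_range (fun j => (-1 : ℤˣ) ^ j), prod_pow_eq_pow_sum, sum_range_id]

theorem det_submatrix_id_revPerm {k : ℕ} (M : Matrix (Fin k) (Fin k) R) :
    (M.submatrix id Fin.revPerm).det = (-1) ^ (k * (k - 1) / 2) * M.det := by
  simp [det_permute', sign_revPerm]

theorem det_eq_det_submatrix_natAdd {n k : ℕ} (M : Matrix (Fin (n + k)) (Fin (n + k)) R)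
    (hM : ∀ r (c : Fin n), M r (c.castAdd k) = if r = c.castAdd k then 1 else 0) :
    M.det = (M.submatrix (Fin.natAdd n) (Fin.natAdd n)).det := by
  have blocks : M.submatrix finSumFinEquiv finSumFinEquiv =
      fromBlocks 1 (M.submatrix (Fin.castAdd k) (Fin.natAdd n))
        0 (M.submatrix (Fin.natAdd n) (Fin.natAdd n)) := by
    ext (r | r) (c | c)
    · simp [hM, one_apply]
    · simp
    · have : n + (r : ℕ) ≠ c := by omega
      simp [hM, Fin.ext_iff, this]
    · simp
  rw [← det_submatrix_equiv_self finSumFinEquiv, blocks, det_fromBlocks_zero₂₁, det_one, one_mul]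

theorem det_prod_range_mul {ι : Type*} [Fintype ι] [DecidableEq ι] {a b : ι → ℕ → R} {v : ℕ → R}
    (habv : ∀ i t, a i t * b i t * v t = 1) {n : ℕ} {f : ι → ℕ} (hf : ∀ j, f j ≤ n)
    (y : ι → ι → R) :
    (of fun i j => (∏ t ∈ range (f j), a i t) * y i j).det =
      (∏ i, ∏ t ∈ range n, a i t) * ((∏ j, ∏ t ∈ Ico (f j) n, v t) *
        (of fun i j => (∏ t ∈ Ico (f j) n, b i t) * y i j).det) := by
  rw [← det_mul_row, ← det_mul_column]
  congr 1
  ext i j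
  simp only [of_apply]
  rw [prod_range_eq_prod_range_mul_of_mul_eq_one (habv i) (hf j), mul_assoc, mul_assoc]

end Determinants

section QWronskian

open Finset Matrix

/-- The `k × k` matrix of the q-Wronskian of a section `s` of rank `k` with diagonal twist `ξ`: with
0-based indices, column `c` is `Z(q^{k-2}z) ⋯ Z(q^{k-1-c}z) s(q^{k-1-c}z)`, where `Z = diag(ξ)`. All
truncated subtractions in the exponents are exact since `c < k`. -/
def qWronskianMatrix {R : Type*} [CommSemiring R] {k : ℕ} (q : R) (ξ s : Fin k → R → R) (z : R) :
    Matrix (Fin k) (Fin k) R :=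
  of fun r c => (∏ t ∈ range c, ξ r (q ^ (k - 2 - t) * z)) * s r (q ^ (k - 1 - c) * z)

variable {K : Type*} [Field K] {k : ℕ} {q z : K}

theorem qWronskianMatrix_reflect (hq : q ≠ 0) (hz : z ≠ 0) (ξ : Fin k → K → K) {s : Fin k → K → K}
    (hs : ∀ r w, w ≠ 0 → s r w⁻¹ = s r w) :
    qWronskianMatrix q ξ s (q ^ (k - 1) * z)⁻¹ =
      of fun r c : Fin k => (∏ t ∈ range c, ξ r (q ^ (t + 1) * z)⁻¹) * s r (q ^ (c : ℕ) * z) := by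
  ext r c
  simp only [qWronskianMatrix, of_apply]
  congr 1
  · refine prod_congr rfl fun t ht => ?_
    have := mem_range.1 ht
    rw [pow_mul_inv_pow_mul hq z (by omega : k - 2 - t + (t + 1) = k - 1)]
  · rw [pow_mul_inv_pow_mul hq z (by omega : k - 1 - c + c = k - 1),
      hs r _ (mul_ne_zero (pow_ne_zero _ hq) hz)]

theorem qWronskianMatrix_submatrix_revPerm {R : Type*} [CommSemiring R] (q z : R)
    (ξ s : Fin k → R → R) :
    (qWronskianMatrix q ξ s z).submatrix id Fin.revPerm =
      of fun r c : Fin k =>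
        (∏ t ∈ Ico (c : ℕ) (k - 1), ξ r (q ^ t * z)) * s r (q ^ (c : ℕ) * z) := by
  ext r c
  simp only [qWronskianMatrix, submatrix_apply, of_apply, id, Fin.revPerm_apply, Fin.val_rev]
  congr 1
  · rw [prod_Ico_eq_prod_range, ← prod_range_reflect]
    refine prod_congr (congrArg range (by omega)) fun t ht => ?_
    have := mem_range.1 ht
    congr 3
    omega
  · congr 3
    omega

theorem det_qWronskianMatrix_reflect (hq : q ≠ 0) (hz : z ≠ 0) {ξ s : Fin k → K → K} {η : K → K}
    (hs : ∀ r w, w ≠ 0 → s r w⁻¹ = s r w) (hη : ∀ w, w ≠ 0 → η w ≠ 0)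
    (hξ : ∀ r w, w ≠ 0 → ξ r w * ξ r (q * w)⁻¹ = η (q * w)⁻¹) :
    (qWronskianMatrix q ξ s (q ^ (k - 1) * z)⁻¹).det =
      (-1) ^ (k * (k - 1) / 2) * (∏ j ∈ range (k - 1), ((∏ r, ξ r (q ^ (j + 1) * z)⁻¹) *
        ∏ i ∈ range (k - 1 - j), (η (q ^ (j + 1 + i) * z)⁻¹)⁻¹)) *
          (qWronskianMatrix q ξ s z).det := by
  have hqz (m : ℕ) : q ^ m * z ≠ 0 := mul_ne_zero (pow_ne_zero m hq) hz
  have twist_cancel (r : Fin k) (t : ℕ) :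
      ξ r (q ^ (t + 1) * z)⁻¹ * ξ r (q ^ t * z) * (η (q ^ (t + 1) * z)⁻¹)⁻¹ = 1 := by
    have hξt := hξ r (q ^ t * z) (hqz t)
    rw [← mul_assoc, ← pow_succ'] at hξt
    rw [mul_comm (ξ r _), hξt, mul_inv_cancel₀ (hη _ (inv_ne_zero (hqz _)))]
  rw [qWronskianMatrix_reflect hq hz ξ hs,
    det_prod_range_mul (n := k - 1) twist_cancel (fun c => by omega)
      (fun r c => s r (q ^ (c : ℕ) * z)),
    ← qWronskianMatrix_submatrix_revPerm, det_submatrix_id_revPerm,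
    prod_comm, prod_fin_prod_Ico_eq_prod_range, prod_mul_distrib]
  simp only [add_right_comm _ 1]
  ring

theorem Dwr_eq_det_qWronskianMatrix (n k : ℕ) (q : ℂ) (ξ s : ℕ → ℂ → ℂ) (z : ℂ) :
    Dwr (n + k) q ξ s k z = (qWronskianMatrix q (fun r : Fin k => ξ (n + r + 1))
      (fun r => s (n + r + 1)) z).det := by
  rw [Dwr, det_eq_det_submatrix_natAdd _ fun r c => by simp]
  congr 1
  ext r c
  simp [qWronskianMatrix]

theorem Ck_eq_prod_fin (n k : ℕ) (q : ℂ) (ξ : ℕ → ℂ → ℂ) (z : ℂ) :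
    Ck (n + k) q ξ k z = (-1) ^ (k * (k - 1) / 2) *
      ∏ j ∈ range (k - 1), ((∏ r : Fin k, ξ (n + r + 1) (q ^ (j + 1) * z)⁻¹) *
        ∏ i ∈ range (k - 1 - j), (-(ξ (n + k) (q ^ (j + 1 + i) * z)⁻¹ *
          ξ (n + k - 1) (q ^ (j + 1 + i) * z)⁻¹))⁻¹) := by
  have prod_rows (w : ℂ) : ∏ i ∈ range k, ξ (n + k - i) w = ∏ r : Fin k, ξ (n + r + 1) w := by
    rw [Fin.prod_univ_eq_prod_range (fun r => ξ (n + r + 1) w), ← prod_range_reflect]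
    refine prod_congr rfl fun i hi => ?_
    have := mem_range.1 hi
    congr 1
    omega
  simp only [Ck, prod_rows, inv_neg, mul_inv]

end QWronskian

/-- for a reflection-invariant section (`s(1/z) = s(z)`) and nowhere
vanishing twists satisfying `ξ_i(z)·ξ_i(1/(qz)) = −ξ_N(1/(qz))·ξ_{N−1}(1/(qz))`, the
q-Wronskians satisfy `D_k(1/(q^{k−1}z)) = C_k(z)·D_k(z)`; in particular if `C_k ≡ 1`
then `D_k` is reflection-symmetric. -/
theorem stmt_12 (N : ℕ) (hN : 2 ≤ N) (q : ℂ) (hq : q ≠ 0) (ξ s : ℕ → ℂ → ℂ)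
    (hξne : ∀ i : ℕ, 1 ≤ i → i ≤ N → ∀ z : ℂ, z ≠ 0 → ξ i z ≠ 0)
    (hs : ∀ r : ℕ, 1 ≤ r → r ≤ N → ∀ z : ℂ, z ≠ 0 → s r z⁻¹ = s r z)
    (hrel : ∀ i : ℕ, 1 ≤ i → i ≤ N → ∀ z : ℂ, z ≠ 0 →
      ξ i z * ξ i ((q * z)⁻¹) = -(ξ N ((q * z)⁻¹) * ξ (N - 1) ((q * z)⁻¹))) :
    ∀ k : ℕ, 2 ≤ k → k ≤ N → ∀ z : ℂ, z ≠ 0 →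
      Dwr N q ξ s k ((q ^ (k - 1) * z)⁻¹) = Ck N q ξ k z * Dwr N q ξ s k z ∧
      ((∀ w : ℂ, w ≠ 0 → Ck N q ξ k w = 1) →
        ∀ w : ℂ, w ≠ 0 → Dwr N q ξ s k ((q ^ (k - 1) * w)⁻¹) = Dwr N q ξ s k w) := by
  intro k _ hkN z hz
  obtain ⟨n, rfl⟩ := Nat.exists_eq_add_of_le' hkN
  let η (w : ℂ) : ℂ := -(ξ (n + k) w * ξ (n + k - 1) w)
  have η_ne_zero (w : ℂ) (hw : w ≠ 0) : η w ≠ 0 :=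
    neg_ne_zero.2 (mul_ne_zero (hξne _ (by omega) le_rfl w hw)
      (hξne _ (by omega) (by omega) w hw))
  have reflect (w : ℂ) (hw : w ≠ 0) :
      Dwr (n + k) q ξ s k (q ^ (k - 1) * w)⁻¹ = Ck (n + k) q ξ k w * Dwr (n + k) q ξ s k w := by
    rw [Dwr_eq_det_qWronskianMatrix, Dwr_eq_det_qWronskianMatrix, Ck_eq_prod_fin]
    exact det_qWronskianMatrix_reflect (ξ := fun r => ξ (n + r + 1)) (η := η) hq hw
      (fun r => hs _ (by omega) (by omega)) η_ne_zero fun r => hrel _ (by omega) (by omega)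
  exact ⟨reflect z hz, fun hC w hw => by rw [reflect w hw, hC w hw, one_mul]⟩
end

section
/- Let ε ∈ ℂ and let φ₁, φ₂, Q₊, Q₋, Λ : ℂ → ℂ be functions such that for every z ∈ ℂ: (i) the additive QQ-relation φ₂(z)Q₊(z)Q₋(z+ε) − φ₁(z)Q₋(z)Q₊(z+ε) = Λ(z) holds; (ii) Q₊(−z) = Q₊(z) and Q₋(−z) = Q₋(z); (iii) φ₁(−z−ε) = −φ₂(z) and φ₂(−z−ε) = −φ₁(z). Then for every z ∈ ℂ: Λ(−z−ε) = Λ(z), and the diagonal matrix A(z) = diag(φ₁(z), φ₂(z)) satisfies A(−z−ε)·A(z) = −φ₁(−z−ε)φ₂(−z−ε)·I₂ = −det A(−z−ε)·I₂. -/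
open Matrix

/-!
For even `Q₊` and `Q₋`, the involution `z ↦ -z - ε` swaps the products `Q₊(z) Q₋(z + ε)` and
`Q₋(z) Q₊(z + ε)`. It swaps the twists up to sign, so the two terms of the QQ-relation trade places.
The same condition on the twists says that `A(z)` is minus the adjugate of `A(-z - ε)`, and
`M * adjugate M = det M • 1`.
-/

section Reflection

variable {G R : Type*} [AddCommGroup G]

theorem even_apply_neg_sub {Q : G → R} (hQ : Function.Even Q) (z ε : G) :
    Q (-z - ε) = Q (z + ε) := by
  rw [← neg_add', hQ]

theorem apply_neg_sub_eq_neg_symm [InvolutiveNeg R] {ε : G} {φ ψ : G → R}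
    (h : ∀ z, φ (-z - ε) = -ψ z) (z : G) : ψ (-z - ε) = -φ z := by
  have reflect_reflect : -(-z - ε) - ε = z := by abel
  rw [← neg_eq_iff_eq_neg, ← h, reflect_reflect]

variable [CommRing R]

/-- The left-hand side of the additive QQ-relation, a twisted difference Wronskian of `Qp` and `Qm`
with step `ε`; `Qp` and `Qm` stand for `Q₊` and `Q₋`. -/
def qqWronskian (ε : G) (φ₁ φ₂ Qp Qm : G → R) (z : G) : R :=
  φ₂ z * Qp z * Qm (z + ε) - φ₁ z * Qm z * Qp (z + ε)

theorem qqWronskian_neg_sub {ε : G} {φ₁ φ₂ Qp Qm : G → R}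
    (hQp : Function.Even Qp) (hQm : Function.Even Qm)
    (hφ : ∀ z, φ₁ (-z - ε) = -φ₂ z) (z : G) :
    qqWronskian ε φ₁ φ₂ Qp Qm (-z - ε) = qqWronskian ε φ₁ φ₂ Qp Qm z := by
  calc qqWronskian ε φ₁ φ₂ Qp Qm (-z - ε)
      = -φ₁ z * Qp (z + ε) * Qm z - -φ₂ z * Qm (z + ε) * Qp z := by
        rw [qqWronskian, sub_add_cancel, hφ, apply_neg_sub_eq_neg_symm hφ,
          even_apply_neg_sub hQp, even_apply_neg_sub hQm, hQp, hQm]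
    _ = qqWronskian ε φ₁ φ₂ Qp Qm z := by
        rw [qqWronskian]
        ring

end Reflection

section Diagonal

variable {R : Type*} [CommRing R]

theorem det_diag_fin_two (a b : R) : (!![a, 0; 0, b]).det = a * b := by
  rw [det_fin_two_of, mul_zero, sub_zero]

theorem diag_fin_two_mul_diag_neg_swap (a b : R) :
    !![a, 0; 0, b] * !![-b, 0; 0, -a] = (-(a * b)) • (1 : Matrix (Fin 2) (Fin 2) R) := by
  have eq_neg_adjugate : !![-b, 0; 0, -a] = -adjugate !![a, 0; 0, b] := by
    simp [adjugate_fin_two_of]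
  rw [eq_neg_adjugate, mul_neg, mul_adjugate, det_diag_fin_two, neg_smul]

end Diagonal

theorem stmt_16_general {G R : Type*} [AddCommGroup G] [CommRing R] {ε : G}
    {φ₁ φ₂ Qp Qm Lam : G → R}
    (hQQ : ∀ z, qqWronskian ε φ₁ φ₂ Qp Qm z = Lam z)
    (hQp : Function.Even Qp) (hQm : Function.Even Qm)
    (hφ : ∀ z, φ₁ (-z - ε) = -φ₂ z) (z : G) :
    Lam (-z - ε) = Lam z ∧
    !![φ₁ (-z - ε), 0; 0, φ₂ (-z - ε)] * !![φ₁ z, 0; 0, φ₂ z] =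
      (-(φ₁ (-z - ε) * φ₂ (-z - ε))) • (1 : Matrix (Fin 2) (Fin 2) R) ∧
    -(φ₁ (-z - ε) * φ₂ (-z - ε)) = -(!![φ₁ (-z - ε), 0; 0, φ₂ (-z - ε)]).det := by
  refine ⟨?_, ?_, by rw [det_diag_fin_two]⟩
  · rw [← hQQ, ← hQQ, qqWronskian_neg_sub hQp hQm hφ]
  · have φ₁_eq : φ₁ z = -φ₂ (-z - ε) := by rw [apply_neg_sub_eq_neg_symm hφ, neg_neg]
    have φ₂_eq : φ₂ z = -φ₁ (-z - ε) := by rw [hφ, neg_neg]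
    rw [φ₁_eq, φ₂_eq, diag_fin_two_mul_diag_neg_swap]

/-- reflection invariance for generalized Z-twisted Miura (GL(2),ε)-opers.
If the additive QQ-relation holds, the Q's are even and the twists satisfy the reflection
conditions, then `Λ(−z−ε) = Λ(z)` and
`A(−z−ε)·A(z) = −φ₁(−z−ε)φ₂(−z−ε)·I₂ = −det A(−z−ε)·I₂`. -/
theorem stmt_16 (ε : ℂ) (φ₁ φ₂ Qp Qm Lam : ℂ → ℂ)
    (hQQ : ∀ z : ℂ, φ₂ z * Qp z * Qm (z + ε) - φ₁ z * Qm z * Qp (z + ε) = Lam z)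
    (hQp : ∀ z : ℂ, Qp (-z) = Qp z) (hQm : ∀ z : ℂ, Qm (-z) = Qm z)
    (hφ₁ : ∀ z : ℂ, φ₁ (-z - ε) = -φ₂ z) (hφ₂ : ∀ z : ℂ, φ₂ (-z - ε) = -φ₁ z) :
    ∀ z : ℂ,
      Lam (-z - ε) = Lam z ∧
      !![φ₁ (-z - ε), 0; 0, φ₂ (-z - ε)] * !![φ₁ z, 0; 0, φ₂ z] =
        (-(φ₁ (-z - ε) * φ₂ (-z - ε))) • (1 : Matrix (Fin 2) (Fin 2) ℂ) ∧
      -(φ₁ (-z - ε) * φ₂ (-z - ε)) = -(!![φ₁ (-z - ε), 0; 0, φ₂ (-z - ε)]).det := by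
  exact stmt_16_general hQQ hQp hQm hφ₁
end

section
/- Let p ∈ ℂ be nonzero (the quantum parameter of Vlaar–Weston), let y₁, …, y_k, t₁, …, tₙ, ξ, ξ̃ ∈ ℂ be nonzero, and fix 1 ≤ i ≤ k. Define q := p⁻², s_j := p·y_j² for 1 ≤ j ≤ k, a_l := t_l² for 1 ≤ l ≤ n, μ := p·ξ, μ̃ := p·ξ̃. Assume every factor occurring in a denominator below is nonzero. Then the Vlaar–Weston Bethe equation ((1−ξ̃ y_i²)/(ξ̃−p² y_i²)) · ((1−ξ y_i²)/(ξ−p² y_i²)) · ((1−p²)(p⁻²−p² y_i⁴))/((1−p⁻²)(1−y_i⁴)) · ∏_{j=1}^{k} (p²(1−p⁻² y_i² y_j⁻²)(1−y_i² y_j²))/((1−p² y_i² y_j⁻²)(p⁻²−p² y_i² y_j²)) · ∏_{l=1}^{n} ((1−p² y_i² t_l²)(1−p² y_i² t_l⁻²))/(p²(1−y_i² t_l²)(1−y_i² t_l⁻²)) = 1 holds if and only if −((s_i²−q)/(q s_i²−1)) · ((μ q s_i−1)(μ̃ q s_i−1))/((s_i−μ q)(s_i−μ̃ q)) · ∏_{j=1}^{k}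 ((q s_i−s_j)(q s_i s_j−1))/((s_i−q s_j)(s_i s_j−q)) · ∏_{l=1}^{n} ((p⁻¹ a_l−s_i)(a_l s_i−p⁻¹))/((a_l−p⁻¹ s_i)(p⁻¹ a_l s_i−1)) = 1. -/
/-!
After the substitution each difference occurring in the q-oper equation is a monomial in `p`, `y`,
`t`, up to sign, times one occurring in the Vlaar–Weston equation. These monomials cancel in every
factor of the two products. Outside the products each boundary parameter leaves a factor
`p⁻¹`, and `(1 - p²) / (1 - p⁻²) = -p²`, so the total discrepancy is `p⁻¹ * p⁻¹ * (-p²) = -1`, the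
sign in front of the q-oper equation.
-/

section Definitions

variable {F ι κ : Type*} [Field F]

/-- The left-hand side of the Vlaar–Weston Bethe equation at the `i`-th Bethe root, for an open XXZ
chain with diagonal boundary parameters `xi`, `xit` and inhomogeneities `t`. -/
def vlaarWestonBethe [Fintype ι] [Fintype κ] (p : F) (y : ι → F) (t : κ → F) (xi xit : F)
    (i : ι) : F :=
  (1 - xit * y i ^ 2) / (xit - p ^ 2 * y i ^ 2) *
    ((1 - xi * y i ^ 2) / (xi - p ^ 2 * y i ^ 2)) *
    ((1 - p ^ 2) * ((p ^ 2)⁻¹ - p ^ 2 * y i ^ 4) / ((1 - (p ^ 2)⁻¹) * (1 - y i ^ 4))) *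
    (∏ j, p ^ 2 * (1 - (p ^ 2)⁻¹ * y i ^ 2 * (y j ^ 2)⁻¹) * (1 - y i ^ 2 * y j ^ 2) /
      ((1 - p ^ 2 * y i ^ 2 * (y j ^ 2)⁻¹) * ((p ^ 2)⁻¹ - p ^ 2 * y i ^ 2 * y j ^ 2))) *
    (∏ l, (1 - p ^ 2 * y i ^ 2 * t l ^ 2) * (1 - p ^ 2 * y i ^ 2 * (t l ^ 2)⁻¹) /
      (p ^ 2 * (1 - y i ^ 2 * t l ^ 2) * (1 - y i ^ 2 * (t l ^ 2)⁻¹)))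

/-- The left-hand side of the q-oper Bethe equation at the `i`-th Bethe root. The argument `r`
stands for the chosen square root of `q`. -/
def qOperBethe [Fintype ι] [Fintype κ] (q r : F) (s : ι → F) (a : κ → F) (μ μt : F) (i : ι) : F :=
  -((s i ^ 2 - q) / (q * s i ^ 2 - 1)) *
    ((μ * q * s i - 1) * (μt * q * s i - 1) / ((s i - μ * q) * (s i - μt * q))) *
    (∏ j, (q * s i - s j) * (q * s i * s j - 1) / ((s i - q * s j) * (s i * s j - q))) *
    (∏ l, (r * a l - s i) * (a l * s i - r) / ((a l - r * s i) * (r * a l * s i - 1)))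

/-- No denominator of `vlaarWestonBethe` vanishes, apart from the powers of `p`, `y` and `t`. -/
structure VlaarWestonRegular (p : F) (y : ι → F) (t : κ → F) (xi xit : F) (i : ι) : Prop where
  boundary_xit : xit - p ^ 2 * y i ^ 2 ≠ 0
  boundary_xi : xi - p ^ 2 * y i ^ 2 ≠ 0
  parameter : 1 - (p ^ 2)⁻¹ ≠ 0
  self : 1 - y i ^ 4 ≠ 0
  root_div : ∀ j, 1 - p ^ 2 * y i ^ 2 * (y j ^ 2)⁻¹ ≠ 0
  root_mul : ∀ j, (p ^ 2)⁻¹ - p ^ 2 * y i ^ 2 * y j ^ 2 ≠ 0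
  site_mul : ∀ l, 1 - y i ^ 2 * t l ^ 2 ≠ 0
  site_div : ∀ l, 1 - y i ^ 2 * (t l ^ 2)⁻¹ ≠ 0

/-- No denominator of `qOperBethe` vanishes. -/
structure QOperRegular (q r : F) (s : ι → F) (a : κ → F) (μ μt : F) (i : ι) : Prop where
  self : q * s i ^ 2 - 1 ≠ 0
  boundary_μ : s i - μ * q ≠ 0
  boundary_μt : s i - μt * q ≠ 0
  root_div : ∀ j, s i - q * s j ≠ 0
  root_mul : ∀ j, s i * s j - q ≠ 0
  site_div : ∀ l, a l - r * s i ≠ 0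
  site_mul : ∀ l, r * a l * s i - 1 ≠ 0

end Definitions

section Denominators

variable {F : Type*} [Field F] {p : F}

theorem self_denominator_eq (hp : p ≠ 0) (y : F) :
    (p ^ 2)⁻¹ * (p * y ^ 2) ^ 2 - 1 = -(1 - y ^ 4) := by
  field_simp
  ring

theorem boundary_denominator_eq (hp : p ≠ 0) (ξ x : F) :
    p * x - p * ξ * (p ^ 2)⁻¹ = -p⁻¹ * (ξ - p ^ 2 * x) := by
  field_simp
  ring

theorem root_div_denominator_eq (hp : p ≠ 0) (x : F) {w : F} (hw : w ≠ 0) :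
    p * x - (p ^ 2)⁻¹ * (p * w) = -(p⁻¹ * w) * (1 - p ^ 2 * x * w⁻¹) := by
  field_simp
  ring

theorem root_mul_denominator_eq (x w : F) :
    p * x * (p * w) - (p ^ 2)⁻¹ = -((p ^ 2)⁻¹ - p ^ 2 * x * w) := by
  ring

theorem site_div_denominator_eq (hp : p ≠ 0) (x : F) {b : F} (hb : b ≠ 0) :
    b - p⁻¹ * (p * x) = b * (1 - x * b⁻¹) := by
  field_simp

theorem site_mul_denominator_eq (hp : p ≠ 0) (x b : F) :
    p⁻¹ * b * (p * x) - 1 = -(1 - x * b) := by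
  field_simp
  ring

end Denominators

section Factors

variable {F : Type*} [Field F] {p : F}

theorem boundary_factor_eq (hp : p ≠ 0) (ξ x : F) :
    (1 - ξ * x) / (ξ - p ^ 2 * x) =
      p⁻¹ * ((p * ξ * (p ^ 2)⁻¹ * (p * x) - 1) / (p * x - p * ξ * (p ^ 2)⁻¹)) := by
  have numerator_eq : p * ξ * (p ^ 2)⁻¹ * (p * x) - 1 = -(1 - ξ * x) := by
    field_simp
    ring
  rw [numerator_eq, boundary_denominator_eq hp, neg_mul, neg_div_neg_eq, ← mul_div_assoc,
    mul_div_mul_left _ _ (inv_ne_zero hp)]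

theorem one_sub_div_one_sub_inv {c : F} (hc : c ≠ 0) (hc' : 1 - c⁻¹ ≠ 0) :
    (1 - c) / (1 - c⁻¹) = -c := by
  rw [div_eq_iff hc']
  field_simp
  ring

theorem self_factor_eq (hp : p ≠ 0) (hp' : 1 - (p ^ 2)⁻¹ ≠ 0) (y : F) :
    (1 - p ^ 2) * ((p ^ 2)⁻¹ - p ^ 2 * y ^ 4) / ((1 - (p ^ 2)⁻¹) * (1 - y ^ 4)) =
      -p ^ 2 * (((p * y ^ 2) ^ 2 - (p ^ 2)⁻¹) / ((p ^ 2)⁻¹ * (p * y ^ 2) ^ 2 - 1)) := by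
  have numerator_eq : (p * y ^ 2) ^ 2 - (p ^ 2)⁻¹ = -((p ^ 2)⁻¹ - p ^ 2 * y ^ 4) := by ring
  rw [numerator_eq, self_denominator_eq hp, neg_div_neg_eq, mul_div_mul_comm,
    one_sub_div_one_sub_inv (pow_ne_zero 2 hp) hp']

theorem root_factor_eq (hp : p ≠ 0) (x : F) {w : F} (hw : w ≠ 0) :
    p ^ 2 * (1 - (p ^ 2)⁻¹ * x * w⁻¹) * (1 - x * w) /
        ((1 - p ^ 2 * x * w⁻¹) * ((p ^ 2)⁻¹ - p ^ 2 * x * w)) =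
      ((p ^ 2)⁻¹ * (p * x) - p * w) * ((p ^ 2)⁻¹ * (p * x) * (p * w) - 1) /
        ((p * x - (p ^ 2)⁻¹ * (p * w)) * (p * x * (p * w) - (p ^ 2)⁻¹)) := by
  have numerator_eq :
      ((p ^ 2)⁻¹ * (p * x) - p * w) * ((p ^ 2)⁻¹ * (p * x) * (p * w) - 1) =
        p⁻¹ * w * (p ^ 2 * (1 - (p ^ 2)⁻¹ * x * w⁻¹) * (1 - x * w)) := by
    field_simp
    ring
  rw [numerator_eq, root_div_denominator_eq hp x hw, root_mul_denominator_eq, neg_mul,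
    neg_mul_neg, mul_assoc (p⁻¹ * w), mul_div_mul_left _ _ (mul_ne_zero (inv_ne_zero hp) hw)]

theorem site_factor_eq (hp : p ≠ 0) (x : F) {b : F} (hb : b ≠ 0) :
    (1 - p ^ 2 * x * b) * (1 - p ^ 2 * x * b⁻¹) / (p ^ 2 * (1 - x * b) * (1 - x * b⁻¹)) =
      (p⁻¹ * b - p * x) * (b * (p * x) - p⁻¹) /
        ((b - p⁻¹ * (p * x)) * (p⁻¹ * b * (p * x) - 1)) := by
  have numerator_eq :
      (p⁻¹ * b - p * x) * (b * (p * x) - p⁻¹) =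
        -((p ^ 2)⁻¹ * b) * ((1 - p ^ 2 * x * b) * (1 - p ^ 2 * x * b⁻¹)) := by
    field_simp
    ring
  have denominator_eq :
      (b - p⁻¹ * (p * x)) * (p⁻¹ * b * (p * x) - 1) =
        -((p ^ 2)⁻¹ * b) * (p ^ 2 * (1 - x * b) * (1 - x * b⁻¹)) := by
    rw [site_div_denominator_eq hp x hb, site_mul_denominator_eq hp]
    field_simp
  have scale_ne_zero : -((p ^ 2)⁻¹ * b) ≠ 0 :=
    neg_ne_zero.mpr (mul_ne_zero (inv_ne_zero (pow_ne_zero 2 hp)) hb)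
  rw [numerator_eq, denominator_eq, mul_div_mul_left _ _ scale_ne_zero]

theorem boundary_mul_self_factor_eq (hp : p ≠ 0) (hp' : 1 - (p ^ 2)⁻¹ ≠ 0) (y ξ ξt : F) :
    (1 - ξt * y ^ 2) / (ξt - p ^ 2 * y ^ 2) * ((1 - ξ * y ^ 2) / (ξ - p ^ 2 * y ^ 2)) *
        ((1 - p ^ 2) * ((p ^ 2)⁻¹ - p ^ 2 * y ^ 4) / ((1 - (p ^ 2)⁻¹) * (1 - y ^ 4))) =
      -(((p * y ^ 2) ^ 2 - (p ^ 2)⁻¹) / ((p ^ 2)⁻¹ * (p * y ^ 2) ^ 2 - 1)) *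
        ((p * ξ * (p ^ 2)⁻¹ * (p * y ^ 2) - 1) * (p * ξt * (p ^ 2)⁻¹ * (p * y ^ 2) - 1) /
          ((p * y ^ 2 - p * ξ * (p ^ 2)⁻¹) * (p * y ^ 2 - p * ξt * (p ^ 2)⁻¹))) := by
  have cancel (A B C : F) : p⁻¹ * B * (p⁻¹ * A) * (-p ^ 2 * C) = -C * (A * B) := by
    field_simp
  rw [boundary_factor_eq hp ξ, boundary_factor_eq hp ξt, self_factor_eq hp hp', cancel,
    mul_div_mul_comm]

end Factors

section Equations

variable {F ι κ : Type*} [Field F] {p : F} {y : ι → F} {t : κ → F}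

theorem VlaarWestonRegular.qOperRegular {xi xit : F} {i : ι}
    (h : VlaarWestonRegular p y t xi xit i) (hp : p ≠ 0) (hy : ∀ j, y j ≠ 0) (ht : ∀ l, t l ≠ 0) :
    QOperRegular (p ^ 2)⁻¹ p⁻¹ (fun j ↦ p * y j ^ 2) (fun l ↦ t l ^ 2) (p * xi) (p * xit) i where
  self := by
    rw [self_denominator_eq hp]
    exact neg_ne_zero.mpr h.self
  boundary_μ := by
    rw [boundary_denominator_eq hp]
    exact mul_ne_zero (neg_ne_zero.mpr (inv_ne_zero hp)) h.boundary_xi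
  boundary_μt := by
    rw [boundary_denominator_eq hp]
    exact mul_ne_zero (neg_ne_zero.mpr (inv_ne_zero hp)) h.boundary_xit
  root_div j := by
    have hyj := pow_ne_zero 2 (hy j)
    rw [root_div_denominator_eq hp _ hyj]
    exact mul_ne_zero (neg_ne_zero.mpr (mul_ne_zero (inv_ne_zero hp) hyj)) (h.root_div j)
  root_mul j := by
    rw [root_mul_denominator_eq]
    exact neg_ne_zero.mpr (h.root_mul j)
  site_div l := by
    have htl := pow_ne_zero 2 (ht l)
    rw [site_div_denominator_eq hp _ htl]
    exact mul_ne_zero htl (h.site_div l)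
  site_mul l := by
    rw [site_mul_denominator_eq hp]
    exact neg_ne_zero.mpr (h.site_mul l)

theorem vlaarWestonBethe_eq_qOperBethe [Fintype ι] [Fintype κ] (hp : p ≠ 0)
    (hp' : 1 - (p ^ 2)⁻¹ ≠ 0) (hy : ∀ j, y j ≠ 0) (ht : ∀ l, t l ≠ 0) (xi xit : F) (i : ι) :
    vlaarWestonBethe p y t xi xit i =
      qOperBethe (p ^ 2)⁻¹ p⁻¹ (fun j ↦ p * y j ^ 2) (fun l ↦ t l ^ 2) (p * xi) (p * xit) i := by
  unfold vlaarWestonBethe qOperBethe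
  congr 1
  · congr 1
    · exact boundary_mul_self_factor_eq hp hp' (y i) xi xit
    · exact Finset.prod_congr rfl fun j _ ↦ root_factor_eq hp _ (pow_ne_zero 2 (hy j))
  · exact Finset.prod_congr rfl fun l _ ↦ site_factor_eq hp _ (pow_ne_zero 2 (ht l))

theorem stmt_17_general [Fintype ι] [Fintype κ] (hp : p ≠ 0) (hy : ∀ j, y j ≠ 0)
    (ht : ∀ l, t l ≠ 0) {xi xit : F} {i : ι} (h : VlaarWestonRegular p y t xi xit i) :
    QOperRegular (p ^ 2)⁻¹ p⁻¹ (fun j ↦ p * y j ^ 2) (fun l ↦ t l ^ 2) (p * xi) (p * xit) i ∧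
      vlaarWestonBethe p y t xi xit i =
        qOperBethe (p ^ 2)⁻¹ p⁻¹ (fun j ↦ p * y j ^ 2) (fun l ↦ t l ^ 2) (p * xi) (p * xit) i :=
  ⟨h.qOperRegular hp hy ht, vlaarWestonBethe_eq_qOperBethe hp h.parameter hy ht xi xit i⟩

end Equations

/-- under the substitution `q = p⁻²`, `s_j = p·y_j²`, `a_l = t_l²`,
`μ = p·ξ`, `μ̃ = p·ξ̃`, the Vlaar–Weston Bethe equation for the open XXZ chain with
diagonal boundary conditions is equivalent to the q-oper Bethe equation. -/
theorem stmt_17 (p : ℂ) (hp : p ≠ 0) (k n : ℕ)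
    (y : Fin k → ℂ) (t : Fin n → ℂ) (xi xit : ℂ)
    (hy : ∀ j, y j ≠ 0) (ht : ∀ l, t l ≠ 0) (hxi : xi ≠ 0) (hxit : xit ≠ 0)
    (i : Fin k)
    (q : ℂ) (hq : q = (p ^ 2)⁻¹)
    (s : Fin k → ℂ) (hs : ∀ j, s j = p * y j ^ 2)
    (a : Fin n → ℂ) (ha : ∀ l, a l = t l ^ 2)
    (μ μt : ℂ) (hμ : μ = p * xi) (hμt : μt = p * xit)
    (d1 : xit - p ^ 2 * y i ^ 2 ≠ 0) (d2 : xi - p ^ 2 * y i ^ 2 ≠ 0)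
    (d3 : 1 - (p ^ 2)⁻¹ ≠ 0) (d4 : 1 - y i ^ 4 ≠ 0)
    (d5 : ∀ j, 1 - p ^ 2 * y i ^ 2 * (y j ^ 2)⁻¹ ≠ 0)
    (d6 : ∀ j, (p ^ 2)⁻¹ - p ^ 2 * y i ^ 2 * y j ^ 2 ≠ 0)
    (d7 : ∀ l, 1 - y i ^ 2 * t l ^ 2 ≠ 0) (d8 : ∀ l, 1 - y i ^ 2 * (t l ^ 2)⁻¹ ≠ 0)
    (d9 : q * s i ^ 2 - 1 ≠ 0) (d10 : s i - μ * q ≠ 0) (d11 : s i - μt * q ≠ 0)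
    (d12 : ∀ j, s i - q * s j ≠ 0) (d13 : ∀ j, s i * s j - q ≠ 0)
    (d14 : ∀ l, a l - p⁻¹ * s i ≠ 0) (d15 : ∀ l, p⁻¹ * a l * s i - 1 ≠ 0) :
    ((1 - xit * y i ^ 2) / (xit - p ^ 2 * y i ^ 2) *
        ((1 - xi * y i ^ 2) / (xi - p ^ 2 * y i ^ 2)) *
        ((1 - p ^ 2) * ((p ^ 2)⁻¹ - p ^ 2 * y i ^ 4) /
          ((1 - (p ^ 2)⁻¹) * (1 - y i ^ 4))) *
        (∏ j, p ^ 2 * (1 - (p ^ 2)⁻¹ * y i ^ 2 * (y j ^ 2)⁻¹) * (1 - y i ^ 2 * y j ^ 2) /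
          ((1 - p ^ 2 * y i ^ 2 * (y j ^ 2)⁻¹) * ((p ^ 2)⁻¹ - p ^ 2 * y i ^ 2 * y j ^ 2))) *
        (∏ l, (1 - p ^ 2 * y i ^ 2 * t l ^ 2) * (1 - p ^ 2 * y i ^ 2 * (t l ^ 2)⁻¹) /
          (p ^ 2 * (1 - y i ^ 2 * t l ^ 2) * (1 - y i ^ 2 * (t l ^ 2)⁻¹))) = 1) ↔
    (-((s i ^ 2 - q) / (q * s i ^ 2 - 1)) *
        ((μ * q * s i - 1) * (μt * q * s i - 1) / ((s i - μ * q) * (s i - μt * q))) *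
        (∏ j, (q * s i - s j) * (q * s i * s j - 1) /
          ((s i - q * s j) * (s i * s j - q))) *
        (∏ l, (p⁻¹ * a l - s i) * (a l * s i - p⁻¹) /
          ((a l - p⁻¹ * s i) * (p⁻¹ * a l * s i - 1))) = 1) := by
  obtain ⟨rfl, rfl⟩ : s = (fun j ↦ p * y j ^ 2) ∧ a = fun l ↦ t l ^ 2 := ⟨funext hs, funext ha⟩
  subst hq hμ hμt
  exact Eq.congr_left (stmt_17_general hp hy ht ⟨d1, d2, d3, d4, d5, d6, d7, d8⟩).2
end
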